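/- The number of rooted quadrangulations with a general boundary of perimeter 2p and n internal faces equals q_{n,p} = ((2p)! / (p! (p-1)!)) * 3^n * (2n+p-1)! / (n! (n+p+1)!), for n >= 0 and p >= 1. -/

import Mathlib

/-- Number of orbits (cycles, including fixed points) of a permutation. -/
noncomputable def orbitCount {D : Type*} [Fintype D] (f : Equiv.Perm D) : ℕ :=
  Nat.card (Quot f.SameCycle)

/-- The size of the orbit of `d` under `f` (degree of the corresponding face). -/
noncomputable def faceDeg {D : Type*} [Fintype D] (f : Equiv.Perm D) (d : D) : ℕ :=
  Set.ncard {e | f.SameCycle d e}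

/-- A rooted planar quadrangulation with a (general) boundary of perimeter `2p`
and `n` internal faces, encoded as a rooted combinatorial map on the dart set
`Fin (4n+2p)` (there are `2n+p` edges, hence `4n+2p` darts): `σ` rotates the
darts around each vertex, `α` is the fixed-point-free involution pairing the
two darts of each edge, faces are the orbits of `σα`, the map is connected,
planarity is the Euler relation `V + F = E + 2`, there are `n + 1` faces in
total, the root face has degree `2p`, and all other faces have degree `4`. -/
structure RootedQuadWB (n p : ℕ) where
  σ : Equiv.Perm (Fin (4 * n + 2 * p))
  α : Equiv.Perm (Fin (4 * n + 2 * p))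
  root : Fin (4 * n + 2 * p)
  α_invol : ∀ d, α (α d) = d
  α_fixfree : ∀ d, α d ≠ d
  connected : ∀ d e : Fin (4 * n + 2 * p),
    ∃ g ∈ Subgroup.closure ({σ, α} : Set (Equiv.Perm (Fin (4 * n + 2 * p)))), g d = e
  euler : orbitCount σ + orbitCount (σ * α) = 2 * n + p + 2
  face_count : orbitCount (σ * α) = n + 1
  root_face : faceDeg (σ * α) root = 2 * p
  internal_faces : ∀ d, ¬ (σ * α).SameCycle root d → faceDeg (σ * α) d = 4

/-- Isomorphism of rooted maps: a relabelling of the darts conjugating `σ` to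
`σ'` and `α` to `α'` and carrying the root dart to the root dart. -/
def QuadIso {n p : ℕ} (m m' : RootedQuadWB n p) : Prop :=
  ∃ π : Equiv.Perm (Fin (4 * n + 2 * p)),
    π * m.σ = m'.σ * π ∧ π * m.α = m'.α * π ∧ π m.root = m'.root



namespace QB

open PowerSeries in
/-- Scaled Catalan series `R = 1 + 3 g R²`. -/
noncomputable def RR : PowerSeries ℚ := PowerSeries.mk fun n => 3 ^ n * (catalan n : ℚ)

/-- Catalan series `C = 1 + R z C²`. -/
noncomputable def CC : PowerSeries (PowerSeries ℚ) :=
  PowerSeries.mk fun p => (catalan p : PowerSeries ℚ) * RR ^ p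

lemma RR_eq : RR = 1 + 3 * PowerSeries.X * RR ^ 2 := by
  ext n
  have h3 : (3 : PowerSeries ℚ) = PowerSeries.C (3 : ℚ) := (map_ofNat PowerSeries.C 3).symm
  rcases n with _ | n
  · simp [RR, mul_assoc]
  · rw [map_add, h3, mul_assoc, PowerSeries.coeff_C_mul, PowerSeries.coeff_succ_X_mul, sq,
      PowerSeries.coeff_mul]
    simp only [RR, PowerSeries.coeff_mk, PowerSeries.coeff_one]
    rw [catalan_succ']
    push_cast
    rw [zero_add, Finset.mul_sum, Finset.mul_sum]
    refine Finset.sum_congr rfl fun x hx => ?_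
    rw [← Finset.HasAntidiagonal.mem_antidiagonal.1 hx]
    ring

lemma coeff_CC_sq (p : ℕ) :
    PowerSeries.coeff p (CC ^ 2) = (catalan (p + 1) : PowerSeries ℚ) * RR ^ p := by
  rw [sq, PowerSeries.coeff_mul, catalan_succ']
  simp only [CC, PowerSeries.coeff_mk]
  push_cast
  rw [Finset.sum_mul]
  refine Finset.sum_congr rfl fun x hx => ?_
  rw [← Finset.HasAntidiagonal.mem_antidiagonal.1 hx]
  ring

lemma CC_eq : CC = 1 + PowerSeries.C RR * PowerSeries.X * CC ^ 2 := by
  ext p : 1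
  rcases p with _ | p
  · simp [CC, mul_assoc]
  · rw [map_add, mul_assoc, PowerSeries.coeff_C_mul, PowerSeries.coeff_succ_X_mul, coeff_CC_sq]
    simp only [CC, PowerSeries.coeff_mk, PowerSeries.coeff_one]
    simp only [Nat.add_eq_zero_iff, one_ne_zero, and_false, if_false]
    ring

/-- generating function of quadrangulations with a boundary. -/
noncomputable def FF : PowerSeries (PowerSeries ℚ) :=
  CC - PowerSeries.C (PowerSeries.X * RR ^ 2) * (CC ^ 2 - CC)

noncomputable def ff (n p : ℕ) : ℚ := PowerSeries.coeff n (PowerSeries.coeff p FF)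

lemma coeff_FF (p : ℕ) : PowerSeries.coeff p FF = (catalan p : PowerSeries ℚ) * RR ^ p
    - PowerSeries.X * RR ^ 2 * ((catalan (p+1) : PowerSeries ℚ) * RR ^ p
      - (catalan p : PowerSeries ℚ) * RR ^ p) := by
  rw [FF, map_sub, PowerSeries.coeff_C_mul, map_sub, coeff_CC_sq]
  simp [CC]

lemma coeff_RR_pow (k : ℕ) : ∀ n : ℕ, PowerSeries.coeff n (RR ^ (k+1)) =
    3 ^ n * (k+1) * ((2 * n + k).factorial : ℚ) / (n.factorial * (n + k + 1).factorial) := by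
  have hstep : ∀ n j : ℕ, PowerSeries.coeff (n+1) (RR ^ (j+1)) =
      PowerSeries.coeff (n+1) (RR ^ j) + 3 * PowerSeries.coeff n (RR ^ (j+2)) := by
    intro n j
    have h3 : (3 : PowerSeries ℚ) = PowerSeries.C (3 : ℚ) := (map_ofNat PowerSeries.C 3).symm
    have h : RR ^ (j+1) = RR ^ j + PowerSeries.C (3:ℚ) * (PowerSeries.X * RR ^ (j+2)) := by
      rw [← h3]
      linear_combination RR ^ j * RR_eq
    rw [h, map_add, PowerSeries.coeff_C_mul, PowerSeries.coeff_succ_X_mul]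
  intro n
  induction n generalizing k with
  | zero =>
    have h0 : PowerSeries.constantCoeff RR = 1 := by
      rw [← PowerSeries.coeff_zero_eq_constantCoeff_apply]; simp [RR]
    have h1 : ((k+1 : ℕ) : ℚ) ≠ 0 := by positivity
    have h2 : ((k.factorial : ℕ) : ℚ) ≠ 0 := by positivity
    simp only [PowerSeries.coeff_zero_eq_constantCoeff, map_pow, h0, one_pow, pow_zero,
      Nat.factorial_zero, mul_zero, zero_add, Nat.factorial_succ k]
    push_cast at h1 ⊢
    field_simp
  | succ n ih =>
    induction k with
    | zero =>
      rw [hstep, ih 1]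
      have e1 : 2 * (n+1) + 0 = (2 * n + 1) + 1 := by ring
      have e2 : n + 1 + 0 + 1 = (n + 1) + 1 := by ring
      rw [e1, e2, Nat.factorial_succ (2*n+1), Nat.factorial_succ n]
      have : PowerSeries.coeff (n+1) (RR ^ 0) = 0 := by
        simp [PowerSeries.coeff_one]
      rw [this]
      push_cast
      field_simp
      ring
    | succ k ihk =>
      rw [hstep, ihk, ih (k+2)]
      have e1 : 2 * (n+1) + (k+1) = (2 * n + k + 2) + 1 := by ring
      have e2 : n + 1 + (k+1) + 1 = (n + k + 2) + 1 := by ring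
      have e3 : 2 * (n+1) + k = 2 * n + k + 2 := by ring
      have e4 : n + 1 + k + 1 = n + k + 2 := by ring
      have e5 : 2 * n + (k + 2) = 2 * n + k + 2 := by ring
      have e6 : n + (k + 2) + 1 = (n + k + 2) + 1 := by ring
      rw [e1, e2, e3, e4, e5, e6, Nat.factorial_succ (2*n+k+2), Nat.factorial_succ n,
        Nat.factorial_succ (n+k+2)]
      push_cast
      field_simp
      ring

lemma FF_quad : PowerSeries.X * (FF - 1) = PowerSeries.X ^ 2 * FF ^ 2
    + PowerSeries.C PowerSeries.X *
      (FF - 1 - PowerSeries.X * PowerSeries.C (RR - PowerSeries.X * RR ^ 3)) := by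
  have h1 := CC_eq
  have h2 : PowerSeries.C RR = 1 + 3 * PowerSeries.C PowerSeries.X * (PowerSeries.C RR) ^ 2 := by
    have := congrArg PowerSeries.C RR_eq
    rw [map_add, map_mul, map_mul, map_pow, map_one, map_ofNat] at this
    exact this
  simp only [FF, map_mul, map_pow, map_sub]
  have hR : (PowerSeries.C RR : PowerSeries (PowerSeries ℚ)) ≠ 0 := by
    intro h
    have := congrArg (fun f => PowerSeries.coeff 0 (PowerSeries.coeff 0 f)) h
    simp [RR] at this
  generalize CC = c at *
  generalize PowerSeries.C RR = R at *
  generalize (PowerSeries.C PowerSeries.X : PowerSeries (PowerSeries ℚ)) = g at *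
  generalize (PowerSeries.X : PowerSeries (PowerSeries ℚ)) = z at *
  apply mul_left_cancel₀ (pow_ne_zero 2 hR)
  obtain ⟨k, hk⟩ : ∃ k, k = g * R ^ 2 := ⟨_, rfl⟩
  obtain ⟨u, hu⟩ : ∃ u, u = z * R := ⟨_, rfl⟩
  have hk' : R = 1 + 3 * k := by rw [hk]; linear_combination h2
  have hu' : u * c ^ 2 = c - 1 := by rw [hu]; linear_combination -h1
  have key : u * R * ((c - 1) * (1 - k * c)) = u ^ 2 * (c * (1 + k - k * c)) ^ 2
      + k * ((c - 1) * (1 - k * c)) - k * u * (1 - k) := by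
    linear_combination u * (c - 1) * (1 - k * c) * hk' + u * (1 + k - k * c) ^ 2 * (-hu')
      + k * (1 - k * c) * hu'
  rw [hk, hu] at key
  linear_combination key


lemma FF_rec (n p : ℕ) : ff n (p+1) = (∑ x ∈ Finset.HasAntidiagonal.antidiagonal p, ∑ y ∈ Finset.HasAntidiagonal.antidiagonal n,
    ff y.1 x.1 * ff y.2 x.2) + (if n = 0 then 0 else ff (n-1) (p+2)) := by
  have h := congrArg (fun f => PowerSeries.coeff n (PowerSeries.coeff (p+2) f)) FF_quad
  simp only [map_add, PowerSeries.coeff_C_mul, map_sub] at h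
  rw [PowerSeries.coeff_succ_X_mul, PowerSeries.coeff_X_pow_mul, PowerSeries.coeff_succ_X_mul] at h
  simp only [PowerSeries.coeff_one, PowerSeries.coeff_C, map_sub] at h
  rw [sq FF, PowerSeries.coeff_mul] at h
  simp only [map_sum, PowerSeries.coeff_mul n, Nat.add_eq_zero_iff, one_ne_zero,
    OfNat.ofNat_ne_zero, and_false, if_false, sub_zero, map_zero] at h
  unfold ff
  rw [h]
  congr 1
  rw [← PowerSeries.coeff_mul]
  rcases n with _ | n
  · simp
  · simp [PowerSeries.coeff_succ_X_mul]

lemma ff_zero (n : ℕ) : ff n 0 = if n = 0 then 1 else 0 := by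
  unfold ff
  rw [coeff_FF]
  simp [PowerSeries.coeff_one]


lemma cat_fact (p : ℕ) : (catalan p : ℚ) * (p.factorial * (p+1).factorial) = (2*p).factorial := by
  have h := Nat.centralBinom_eq_two_mul_choose p
  have h2 := succ_mul_catalan_eq_centralBinom p
  have h3 := Nat.choose_mul_factorial_mul_factorial (show p ≤ 2 * p by omega)
  rw [← h, ← h2, show 2 * p - p = p by omega] at h3
  rw [← h3, Nat.factorial_succ]
  push_cast
  ring

lemma cat_rec (p : ℕ) : (catalan (p+1) : ℚ) * (p + 2) = (4 * p + 2) * catalan p := by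
  have h1 := cat_fact p
  have h2 := cat_fact (p+1)
  rw [show 2 * (p+1) = (2 * p + 1) + 1 by ring, Nat.factorial_succ (2*p+1),
    Nat.factorial_succ (2*p), Nat.factorial_succ (p+1)] at h2
  push_cast at h2
  rw [← h1, Nat.factorial_succ] at h2
  have h4 : (p.factorial : ℚ) ≠ 0 := by positivity
  have h5 : (p + 1 : ℚ) ≠ 0 := by positivity
  push_cast at h2
  have : ((p.factorial : ℚ) * p.factorial * (p+1) * (p+1)) ≠ 0 := by positivity
  apply mul_left_cancel₀ this
  linear_combination h2

lemma ff_closed (n p : ℕ) : ff n (p+1) * ((p+1).factorial * p.factorial * n.factorial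
    * (n + p + 2).factorial) = (2 * (p+1)).factorial * 3 ^ n * (2 * n + p).factorial := by
  have h3 : ∀ m : ℚ, ∀ f : PowerSeries ℚ, PowerSeries.coeff n (PowerSeries.C m * f)
    = m * PowerSeries.coeff n f := fun m f => by rw [PowerSeries.coeff_C_mul]
  have e : (3 : PowerSeries ℚ) * PowerSeries.coeff (p+1) FF =
      PowerSeries.C ((catalan (p+2) : ℚ) + 2 * catalan (p+1)) * RR ^ (p+1)
      - PowerSeries.C ((catalan (p+2) : ℚ) - catalan (p+1)) * RR ^ (p+1+1) := by
    rw [coeff_FF]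
    simp only [map_add, map_sub, map_mul, map_natCast, map_ofNat]
    linear_combination (RR ^ (p+1)) * ((catalan (p+2) : PowerSeries ℚ) - catalan (p+1)) * RR_eq
  rw [← map_ofNat PowerSeries.C 3] at e
  have e2 := congrArg (PowerSeries.coeff n) e
  rw [h3, map_sub, h3, h3, coeff_RR_pow, coeff_RR_pow] at e2
  have e3 : 3 * ff n (p+1) = _ := e2
  have hc := cat_rec (p+1)
  have hf := cat_fact (p+1)
  rw [← hf]
  have x1 : 2 * n + (p+1) = (2 * n + p) + 1 := by ring
  have x2 : n + (p+1) + 1 = (n + p + 1) + 1 := by ring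
  have x3 : n + p + 2 = (n + p + 1) + 1 := by ring
  rw [x1, x2, Nat.factorial_succ (2*n+p), Nat.factorial_succ (n+p+1)] at e3
  rw [x3, Nat.factorial_succ (n+p+1), show p + 1 + 1 = (p+1)+1 from rfl, Nat.factorial_succ (p+1),
    Nat.factorial_succ p]
  push_cast at hc e3 ⊢
  have y : (catalan (p+2) : ℚ) = (4 * (p+1) + 2) * catalan (p+1) / (p + 3) := by
    rw [eq_div_iff (by positivity)]
    rw [← hc]; ring
  rw [y] at e3
  have z : ff n (p+1) = (3 * ff n (p+1)) / 3 := by ring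
  rw [z, e3]
  field_simp
  ring

/-- The number of planar gluings of one `l`-gon and `n` labelled squares. -/
noncomputable def GG (n l : ℕ) : ℚ := if Even l then 4 ^ n * n.factorial * ff n (l / 2) else 0

lemma GG_zero (n : ℕ) : GG n 0 = if n = 0 then 1 else 0 := by
  simp only [GG, Even.zero, if_true, Nat.zero_div, ff_zero]
  split_ifs with h
  · simp [h]
  · simp

lemma sum_even_range (h : ℕ → ℚ) (h0 : ∀ j, h (2 * j + 1) = 0) (q : ℕ) :
    ∑ b ∈ Finset.range (2 * q + 1), h b = ∑ j ∈ Finset.range (q + 1), h (2 * j) := by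
  induction q with
  | zero => simp
  | succ q ih =>
    rw [show 2 * (q+1) + 1 = (2 * q + 1) + 1 + 1 by ring, Finset.sum_range_succ,
      Finset.sum_range_succ, ih, h0, Finset.sum_range_succ _ (q+1)]
    rw [show 2 * (q+1) = 2 * q + 1 + 1 by ring]
    ring

lemma GG_even (n j : ℕ) : GG n (2 * j) = 4 ^ n * n.factorial * ff n j := by
  simp [GG]

lemma GG_odd (n j : ℕ) : GG n (2 * j + 1) = 0 := by
  simp [GG]

lemma GG_rec (n l : ℕ) : GG n (l+1) =
    (∑ b ∈ Finset.range l, ∑ k ∈ Finset.range (n+1),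
      (n.choose k : ℚ) * (GG k (l - 1 - b) * GG (n - k) b)) + 4 * n * GG (n-1) (l+3) := by
  rcases Nat.even_or_odd' l with ⟨q, rfl | rfl⟩
  · rw [GG_odd, show 2 * q + 3 = 2 * (q+1) + 1 by ring, GG_odd, mul_zero, add_zero]
    symm
    refine Finset.sum_eq_zero fun b hb => Finset.sum_eq_zero fun k hk => ?_
    have hb' := Finset.mem_range.1 hb
    rcases Nat.even_or_odd' b with ⟨c, rfl | rfl⟩
    · rw [show 2 * q - 1 - 2 * c = 2 * (q - 1 - c) + 1 by omega, GG_odd]; ring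
    · rw [GG_odd]; ring
  · rw [sum_even_range _ (fun j => Finset.sum_eq_zero fun k hk => by rw [GG_odd]; ring)]
    rw [show 2 * q + 1 + 1 = 2 * (q+1) by ring, show 2 * q + 1 + 3 = 2 * (q + 2) by ring, GG_even,
      GG_even, FF_rec, mul_add]
    congr 1
    · rw [Finset.Nat.sum_antidiagonal_eq_sum_range_succ_mk, ← Finset.sum_range_reflect,
        Finset.mul_sum]
      refine Finset.sum_congr rfl fun j hj => ?_
      have hj' := Finset.mem_range.1 hj
      rw [Finset.Nat.sum_antidiagonal_eq_sum_range_succ_mk, Finset.mul_sum]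
      refine Finset.sum_congr rfl fun k hk => ?_
      have hk' := Finset.mem_range.1 hk
      rw [show 2 * q + 1 - 1 - 2 * j = 2 * (q - j) by omega, GG_even, GG_even,
        show q + 1 - 1 - j = q - j by omega, show q - (q - j) = j by omega]
      have := Nat.choose_mul_factorial_mul_factorial (show k ≤ n by omega)
      rw [← this]
      have h4 : (4:ℚ) ^ n = 4 ^ k * 4 ^ (n - k) := by rw [← pow_add]; congr 1; omega
      rw [h4]
      push_cast
      ring
    · rcases n with _ | n
      · simp
      · rw [if_neg (Nat.succ_ne_zero n), Nat.factorial_succ]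
        push_cast
        ring

end QB


namespace QB

set_option linter.unusedSectionVars false

/-- Number of classes of the equivalence relation generated by `R`. -/
noncomputable def cl {D : Type} (R : D → D → Prop) : ℕ := Nat.card (Quot R)

/-- equivalence relation generated by `R`. -/
abbrev EG {D : Type} (R : D → D → Prop) (x y : D) : Prop := Relation.EqvGen R x y

/-- the graph of a permutation -/
def pr {D : Type} (f : Equiv.Perm D) (x y : D) : Prop := f x = y

/-- union of the graphs of two permutations -/
def prr {D : Type} (f g : Equiv.Perm D) (x y : D) : Prop := f x = y ∨ g x = y

/-- add one pair to a relation -/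
def adj {D : Type} (R : D → D → Prop) (r s x y : D) : Prop := R x y ∨ (x = r ∧ y = s)

/-- size of a predicate -/
noncomputable def sz {D : Type} (S : D → Prop) : ℕ := Set.ncard {x | S x}

section rel
variable {D : Type} {R R' : D → D → Prop}

lemma EG_mono (h : ∀ x y, R x y → EG R' x y) {x y : D} (hxy : EG R x y) : EG R' x y := by
  induction hxy with
  | rel x y h1 => exact h x y h1
  | refl x => exact .refl x
  | symm x y _ ih => exact .symm _ _ ih
  | trans x y z _ _ ih1 ih2 => exact .trans _ _ _ ih1 ih2

lemma EG.sy {x y : D} (h : EG R x y) : EG R y x := .symm _ _ h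
lemma EG.tr {x y z : D} (h : EG R x y) (h' : EG R y z) : EG R x z := .trans _ _ _ h h'
lemma EG.rl {x y : D} (h : R x y) : EG R x y := .rel _ _ h

lemma EG_inv {χ : D → Prop} (h : ∀ x y, R x y → (χ x ↔ χ y)) {x y : D} (hxy : EG R x y) :
    χ x ↔ χ y := by
  induction hxy with
  | rel x y h1 => exact h x y h1
  | refl x => exact Iff.rfl
  | symm x y _ ih => exact ih.symm
  | trans x y z _ _ ih1 ih2 => exact ih1.trans ih2

lemma mk_eq {x y : D} : Quot.mk R x = Quot.mk R y ↔ EG R x y :=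
  ⟨Quot.eqvGen_exact, Quot.eqvGen_sound⟩

lemma cl_congr (h : ∀ x y, EG R x y ↔ EG R' x y) : cl R = cl R' := by
  refine Nat.card_congr ⟨Quot.lift (fun x => Quot.mk R' x) ?_, Quot.lift (fun x => Quot.mk R x) ?_,
    ?_, ?_⟩
  · intro x y hxy
    exact mk_eq.2 ((h x y).1 (EG.rl hxy))
  · intro x y hxy
    exact mk_eq.2 ((h x y).2 (EG.rl hxy))
  · rintro ⟨x⟩; rfl
  · rintro ⟨x⟩; rfl

lemma EG_adj_of {r s x y : D} (h : EG R x y) : EG (adj R r s) x y :=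
  EG_mono (fun _ _ h => EG.rl (Or.inl h)) h

lemma EG_adj_rs {r s : D} : EG (adj R r s) r s := EG.rl (Or.inr ⟨rfl, rfl⟩)

lemma EG_adj {r s x y : D} : EG (adj R r s) x y ↔
    EG R x y ∨ (EG R x r ∧ EG R s y) ∨ (EG R x s ∧ EG R r y) := by
  constructor
  · intro h
    induction h with
    | rel x y h =>
      rcases h with h | ⟨rfl, rfl⟩
      · exact Or.inl (EG.rl h)
      · exact Or.inr (Or.inl ⟨.refl _, .refl _⟩)
    | refl x => exact Or.inl (.refl _)
    | symm x y _ ih =>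
      rcases ih with h | ⟨h1, h2⟩ | ⟨h1, h2⟩
      · exact Or.inl h.sy
      · exact Or.inr (Or.inr ⟨h2.sy, h1.sy⟩)
      · exact Or.inr (Or.inl ⟨h2.sy, h1.sy⟩)
    | trans x y z _ _ ih1 ih2 =>
      rcases ih1 with h | ⟨h1, h2⟩ | ⟨h1, h2⟩
      · rcases ih2 with k | ⟨k1, k2⟩ | ⟨k1, k2⟩
        · exact Or.inl (h.tr k)
        · exact Or.inr (Or.inl ⟨h.tr k1, k2⟩)
        · exact Or.inr (Or.inr ⟨h.tr k1, k2⟩)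
      · rcases ih2 with k | ⟨k1, k2⟩ | ⟨k1, k2⟩
        · exact Or.inr (Or.inl ⟨h1, h2.tr k⟩)
        · exact Or.inr (Or.inl ⟨h1, k2⟩)
        · exact Or.inl (h1.tr k2)
      · rcases ih2 with k | ⟨k1, k2⟩ | ⟨k1, k2⟩
        · exact Or.inr (Or.inr ⟨h1, h2.tr k⟩)
        · exact Or.inl (h1.tr k2)
        · exact Or.inr (Or.inr ⟨h1, k2⟩)
  · rintro (h | ⟨h1, h2⟩ | ⟨h1, h2⟩)
    · exact EG_adj_of h
    · exact ((EG_adj_of h1).tr EG_adj_rs).tr (EG_adj_of h2)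
    · exact ((EG_adj_of h1).tr EG_adj_rs.sy).tr (EG_adj_of h2)

lemma EG_adj_same {r s x y : D} (h : EG R r s) : EG (adj R r s) x y ↔ EG R x y := by
  rw [EG_adj]
  constructor
  · rintro (h1 | ⟨h1, h2⟩ | ⟨h1, h2⟩)
    · exact h1
    · exact (h1.tr h).tr h2
    · exact (h1.tr h.sy).tr h2
  · exact Or.inl

lemma cl_adj_same {r s : D} (h : EG R r s) : cl (adj R r s) = cl R :=
  cl_congr fun _ _ => EG_adj_same h

lemma cl_adj_ne [Finite D] {r s : D} (h : ¬ EG R r s) : cl R = cl (adj R r s) + 1 := by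
  classical
  have := Fintype.ofFinite (Quot R)
  have e : {q : Quot R // q ≠ Quot.mk R s} ≃ Quot (adj R r s) := by
    refine Equiv.ofBijective (fun q => Quot.map id (fun x y hxy => Or.inl hxy) q.1) ⟨?_, ?_⟩
    · rintro ⟨⟨x⟩, hx⟩ ⟨⟨y⟩, hy⟩ hxy
      have h1 : EG (adj R r s) x y := mk_eq.1 hxy
      apply Subtype.ext
      apply mk_eq.2
      have hx' : ¬ EG R x s := fun h => hx (mk_eq.2 h)
      have hy' : ¬ EG R y s := fun h => hy (mk_eq.2 h)
      rcases EG_adj.1 h1 with h1 | ⟨h1, h2⟩ | ⟨h1, h2⟩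
      · exact h1
      · exact absurd h2.sy hy'
      · exact absurd h1 hx'
    · rintro ⟨x⟩
      by_cases hx : EG R x s
      · refine ⟨⟨Quot.mk R r, fun h' => h (mk_eq.1 h')⟩, mk_eq.2 ?_⟩
        exact EG_adj_rs.tr (EG_adj_of hx.sy)
      · exact ⟨⟨Quot.mk R x, fun h' => hx (mk_eq.1 h')⟩, rfl⟩
  unfold cl
  rw [← Nat.card_congr e, Nat.card_eq_fintype_card, Nat.card_eq_fintype_card,
    Fintype.card_subtype_compl, Fintype.card_subtype_eq]
  have : 0 < Fintype.card (Quot R) := Fintype.card_pos_iff.2 ⟨Quot.mk R s⟩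
  omega

lemma cl_adj_le [Finite D] {r s : D} : cl R ≤ cl (adj R r s) + 1 := by
  by_cases h : EG R r s
  · rw [cl_adj_same h]; omega
  · rw [cl_adj_ne h]

/-- restricted relation -/
def rst (R : D → D → Prop) (χ : D → Prop) (x y : {x // χ x}) : Prop := R x.1 y.1

lemma EG_rst_of {χ : D → Prop} {x y : {x // χ x}} (h : EG (rst R χ) x y) : EG R x.1 y.1 := by
  induction h with
  | rel x y h1 => exact EG.rl h1
  | refl x => exact .refl _
  | symm x y _ ih => exact .symm _ _ ih
  | trans x y z _ _ ih1 ih2 => exact .trans _ _ _ ih1 ih2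

lemma EG_rst {χ : D → Prop} (hR : ∀ x y, R x y → (χ x ↔ χ y)) {x y : {x // χ x}} :
    EG (rst R χ) x y ↔ EG R x.1 y.1 := by
  refine ⟨EG_rst_of, fun h => ?_⟩
  obtain ⟨x, hx⟩ := x
  obtain ⟨y, hy⟩ := y
  simp only at h
  induction h with
  | rel x y h1 => exact EG.rl h1
  | refl x => exact .refl _
  | symm x y _ ih => exact .symm _ _ (ih hy hx)
  | trans x y z h1 _ ih1 ih2 =>
    have hy' := (EG_inv hR h1).1 hx
    exact .trans _ _ _ (ih1 hx hy') (ih2 hy' hy)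

lemma cl_split [Finite D] {χ : D → Prop} (hR : ∀ x y, R x y → (χ x ↔ χ y)) :
    cl R = cl (rst R χ) + cl (rst R (fun x => ¬ χ x)) := by
  unfold cl
  rw [← Nat.card_sum]
  symm
  have hR' : ∀ x y, R x y → (¬ χ x ↔ ¬ χ y) := fun x y h => not_congr (hR x y h)
  refine Nat.card_congr (Equiv.ofBijective (Sum.elim (Quot.map Subtype.val (fun _ _ h => h))
    (Quot.map Subtype.val (fun _ _ h => h))) ⟨?_, ?_⟩)
  · rintro (x | x) (y | y) h <;> obtain ⟨x⟩ := x <;> obtain ⟨y⟩ := y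
    · exact congrArg Sum.inl (mk_eq.2 ((EG_rst hR).2 (mk_eq.1 h)))
    · exact absurd ((EG_inv hR (mk_eq.1 h)).1 x.2) y.2
    · exact absurd ((EG_inv hR (mk_eq.1 h)).2 y.2) x.2
    · exact congrArg Sum.inr (mk_eq.2 ((EG_rst hR').2 (mk_eq.1 h)))
  · rintro ⟨x⟩
    by_cases hx : χ x
    · exact ⟨Sum.inl (Quot.mk _ ⟨x, hx⟩), rfl⟩
    · exact ⟨Sum.inr (Quot.mk _ ⟨x, hx⟩), rfl⟩

lemma cl_eq_one_iff [Nonempty D] : cl R = 1 ↔ ∀ x y, EG R x y := by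
  unfold cl
  rw [Nat.card_eq_one_iff_unique]
  constructor
  · rintro ⟨h, _⟩ x y
    exact mk_eq.1 (Subsingleton.elim _ _)
  · intro h
    refine ⟨⟨?_⟩, ⟨Quot.mk _ (Classical.arbitrary D)⟩⟩
    rintro ⟨x⟩ ⟨y⟩
    exact mk_eq.2 (h x y)

lemma cl_eq_one_iff' (r : D) : cl R = 1 ↔ ∀ x, EG R r x := by
  have : Nonempty D := ⟨r⟩
  rw [cl_eq_one_iff]
  exact ⟨fun h => h r, fun h x y => (h x).sy.tr (h y)⟩

end rel

section perm
variable {D : Type} [Finite D]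

lemma perm_closed {f : Equiv.Perm D} {B : D → Prop} (h : ∀ x, B x → B (f x)) (x : D) :
    B x ↔ B (f x) := by
  refine ⟨h x, fun hx => ?_⟩
  have h0 : 0 < Function.minimalPeriod f x := Function.minimalPeriod_pos_of_mem_periodicPts
    (Function.Injective.mem_periodicPts f.injective x)
  have h1 : ∀ i, B (f^[i+1] x) := by
    intro i
    induction i with
    | zero => exact hx
    | succ i ih => rw [Function.iterate_succ_apply']; exact h _ ih
  have h2 := h1 (Function.minimalPeriod f x - 1)
  rwa [Nat.sub_add_cancel h0, Function.iterate_minimalPeriod] at h2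

lemma EG_closed {f : Equiv.Perm D} {B : D → Prop} (h : ∀ x, B x → B (f x)) {x y : D}
    (hxy : EG (pr f) x y) : B x ↔ B y := by
  refine EG_inv (R := pr f) ?_ hxy
  intro x y hf
  rw [← show f x = y from hf]
  exact perm_closed h x

lemma EG_pr (f : Equiv.Perm D) (x : D) : EG (pr f) x (f x) := EG.rl rfl

lemma EG_iter (f : Equiv.Perm D) (x : D) (i : ℕ) : EG (pr f) x (f^[i] x) := by
  induction i with
  | zero => exact .refl _
  | succ i ih =>
    rw [Function.iterate_succ_apply']
    exact ih.tr (EG_pr f _)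

lemma minPer_pos (f : Equiv.Perm D) (x : D) : 0 < Function.minimalPeriod f x :=
  Function.minimalPeriod_pos_of_mem_periodicPts
    (Function.Injective.mem_periodicPts f.injective x)

lemma EG_exists {f : Equiv.Perm D} {x y : D} (h : EG (pr f) x y) :
    ∃ i < Function.minimalPeriod f x, f^[i] x = y := by
  have h0 : ∃ i, f^[i] x = y := by
    refine (EG_closed (B := fun y => ∃ i, f^[i] x = y) ?_ h).1 ⟨0, rfl⟩
    rintro _ ⟨i, rfl⟩
    exact ⟨i + 1, Function.iterate_succ_apply' f i x⟩
  obtain ⟨i, hi⟩ := h0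
  exact ⟨i % Function.minimalPeriod f x, Nat.mod_lt _ (minPer_pos f x), by
    rw [Function.iterate_mod_minimalPeriod_eq, hi]⟩

lemma iter_inj {f : Equiv.Perm D} {x : D} {i j : ℕ} (hi : i < Function.minimalPeriod f x)
    (hj : j < Function.minimalPeriod f x) (h : f^[i] x = f^[j] x) : i = j :=
  Function.iterate_injOn_Iio_minimalPeriod hi hj h

variable [DecidableEq D]

lemma EG_swap_le (f : Equiv.Perm D) (r s x y : D) (h : EG (pr (f * Equiv.swap r s)) x y) :
    EG (adj (pr f) r s) x y := by
  refine EG_mono ?_ h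
  rintro x y rfl
  have h1 : ∀ z, EG (adj (pr f) r s) z (f z) := fun z => EG_adj_of (EG_pr f z)
  rw [Equiv.Perm.mul_apply]
  by_cases hr : x = r
  · subst hr
    rw [Equiv.swap_apply_left]
    exact EG_adj_rs.tr (h1 s)
  · by_cases hs : x = s
    · subst hs
      rw [Equiv.swap_apply_right]
      exact EG_adj_rs.sy.tr (h1 r)
    · rw [Equiv.swap_apply_of_ne_of_ne hr hs]
      exact h1 x

lemma EG_swap_adj (f : Equiv.Perm D) (r s x y : D) :
    EG (adj (pr (f * Equiv.swap r s)) r s) x y ↔ EG (adj (pr f) r s) x y := by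
  have h : ∀ f : Equiv.Perm D, EG (adj (pr (f * Equiv.swap r s)) r s) x y →
      EG (adj (pr f) r s) x y := by
    intro f
    refine EG_mono ?_
    rintro x y (h | ⟨rfl, rfl⟩)
    · exact EG_swap_le f r s x y (EG.rl h)
    · exact EG_adj_rs
  refine ⟨h f, fun h' => h (f * Equiv.swap r s) ?_⟩
  rwa [mul_assoc, Equiv.swap_mul_self, mul_one]

lemma EG_merge {f : Equiv.Perm D} {r s : D} (h : ¬ EG (pr f) r s) :
    EG (pr (f * Equiv.swap r s)) r s := by
  have key : ∀ i, i + 1 ≤ Function.minimalPeriod f s →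
      EG (pr (f * Equiv.swap r s)) r (f^[i+1] s) := by
    intro i
    induction i with
    | zero =>
      intro _
      refine EG.rl ?_
      show (f * Equiv.swap r s) r = _
      simp
    | succ i ih =>
      intro hi
      refine (ih (by omega)).tr (EG.rl ?_)
      show (f * Equiv.swap r s) _ = _
      rw [Equiv.Perm.mul_apply, Equiv.swap_apply_of_ne_of_ne, ← Function.iterate_succ_apply' f]
      · intro h'
        exact h (h' ▸ EG_iter f s (i+1)).sy
      · intro h'
        have := iter_inj (i := i + 1) (j := 0) (f := f) (x := s) (by omega) (by omega) h'
        omega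
  have hp := minPer_pos f s
  have := key (Function.minimalPeriod f s - 1) (by omega)
  rwa [show Function.minimalPeriod f s - 1 + 1 = Function.minimalPeriod f s by omega,
    Function.iterate_minimalPeriod] at this

lemma EG_splt {f : Equiv.Perm D} {r : D} {k : ℕ} (hk : 0 < k)
    (hk' : k < Function.minimalPeriod f r) (x : D) :
    EG (pr (f * Equiv.swap r (f^[k] r))) (f^[k] r) x ↔ ∃ i, 0 < i ∧ i ≤ k ∧ f^[i] r = x := by
  set s := f^[k] r with hs
  have step : ∀ i, 0 < i → i < k → (f * Equiv.swap r s) (f^[i] r) = f^[i+1] r := by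
    intro i hi hik
    rw [Equiv.Perm.mul_apply, Equiv.swap_apply_of_ne_of_ne, ← Function.iterate_succ_apply' f]
    · intro h'
      have := iter_inj (i := i) (j := 0) (f := f) (x := r) (by omega) (by omega) h'
      omega
    · intro h'
      have := iter_inj (f := f) (x := r) (by omega) (by omega) h'
      omega
  have steps : (f * Equiv.swap r s) s = f^[1] r := by
    rw [Equiv.Perm.mul_apply, Equiv.swap_apply_right]; rfl
  constructor
  · intro h
    refine (EG_closed (B := fun x => ∃ i, 0 < i ∧ i ≤ k ∧ f^[i] r = x) ?_ h).1
      ⟨k, hk, le_rfl, rfl⟩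
    rintro _ ⟨i, h1, h2, rfl⟩
    rcases h2.lt_or_eq with h2 | rfl
    · exact ⟨i+1, by omega, h2, (step i h1 h2).symm⟩
    · exact ⟨1, by omega, by omega, steps.symm⟩
  · rintro ⟨i, h1, h2, rfl⟩
    induction i with
    | zero => omega
    | succ i ih =>
      rcases Nat.eq_zero_or_pos i with rfl | hi
      · exact EG.rl steps
      · exact (ih hi (by omega)).tr (EG.rl (step i hi (by omega)))

lemma not_EG_splt {f : Equiv.Perm D} {r s : D} (hrs : r ≠ s) (h : EG (pr f) r s) :
    ¬ EG (pr (f * Equiv.swap r s)) r s := by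
  obtain ⟨k, hk, rfl⟩ := EG_exists h
  have hk0 : 0 < k := by
    rcases Nat.eq_zero_or_pos k with rfl | h
    · exact absurd rfl hrs
    · exact h
  intro h'
  obtain ⟨i, h1, h2, h3⟩ := (EG_splt hk0 hk r).1 h'.sy
  have := iter_inj (i := i) (j := 0) (f := f) (x := r) (by omega) (by omega) h3
  omega

lemma cl_merge {f : Equiv.Perm D} {r s : D} (h : ¬ EG (pr f) r s) :
    cl (pr f) = cl (pr (f * Equiv.swap r s)) + 1 := by
  rw [cl_adj_ne h, ← cl_adj_same (EG_merge h)]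
  congr 1
  exact (cl_congr (EG_swap_adj f r s)).symm

lemma cl_splt {f : Equiv.Perm D} {r s : D} (hrs : r ≠ s) (h : EG (pr f) r s) :
    cl (pr (f * Equiv.swap r s)) = cl (pr f) + 1 := by
  rw [cl_adj_ne (not_EG_splt hrs h), cl_congr (EG_swap_adj f r s), cl_adj_same h]

end perm

end QB


namespace QB

set_option linter.unusedSectionVars false

/-- `α` is an involution with support exactly `S` -/
def IS {D : Type} (S : D → Prop) (α : Equiv.Perm D) : Prop :=
  (∀ x, α (α x) = x) ∧ ∀ x, α x ≠ x ↔ S x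

/-- delete two points -/
def dl {D : Type} (S : D → Prop) (r s : D) (x : D) : Prop := S x ∧ x ≠ r ∧ x ≠ s

/-- planar connected gluings -/
def PP {D : Type} (φ : Equiv.Perm D) (S : D → Prop) (α : Equiv.Perm D) : Prop :=
  IS S α ∧ cl (prr φ α) = 1 ∧ 2 * (cl (pr (φ * α)) + cl (pr φ)) = sz S + 4

/-- the two-component configurations after a split -/
def P2 {D : Type} (φ : Equiv.Perm D) (S : D → Prop) (r s : D) (β : Equiv.Perm D) : Prop :=
  IS S β ∧ cl (adj (prr φ β) r s) = 1 ∧ 2 * (cl (pr (φ * β)) + cl (pr φ)) = sz S + 8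

section gl
variable {D : Type} [Finite D] [DecidableEq D] {S : D → Prop} {φ α β : Equiv.Perm D} {r s : D}

lemma sz_dl (hr : S r) (hs : S s) (hrs : r ≠ s) : sz S = sz (dl S r s) + 2 := by
  unfold sz
  have h : {x | S x} = insert r (insert s {x | dl S r s x}) := by
    ext x
    simp only [Set.mem_ofPred_eq, Set.mem_insert_iff, dl]
    constructor
    · intro h
      by_cases h1 : x = r
      · exact Or.inl h1
      · by_cases h2 : x = s
        · exact Or.inr (Or.inl h2)
        · exact Or.inr (Or.inr ⟨h, h1, h2⟩)
    · rintro (rfl | rfl | h)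
      · exact hr
      · exact hs
      · exact h.1
  rw [h, Set.ncard_insert_of_notMem, Set.ncard_insert_of_notMem]
  · simp [dl]
  · simp [dl, hrs]

lemma IS_fix (h : IS S α) {x : D} (hx : ¬ S x) : α x = x := by
  by_contra h'
  exact hx ((h.2 x).1 h')

lemma rem_apply (h : ∀ x, α (α x) = x) (hrs : α r = s) (x : D) :
    (Equiv.swap r s * α) x = if x = r ∨ x = s then x else α x := by
  have hsr : α s = r := by rw [← hrs, h]
  rw [Equiv.Perm.mul_apply]
  split_ifs with hx
  · rcases hx with rfl | rfl
    · rw [hrs, Equiv.swap_apply_right]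
    · rw [hsr, Equiv.swap_apply_left]
  · push Not at hx
    rw [Equiv.swap_apply_of_ne_of_ne]
    · intro h'
      apply hx.2
      rw [← h x, h', hrs]
    · intro h'
      apply hx.1
      rw [← h x, h', hsr]

lemma IS_remove (h : IS S α) (hrs : α r = s) : IS (dl S r s) (Equiv.swap r s * α) := by
  have key := rem_apply h.1 hrs
  have hsr : α s = r := by rw [← hrs, h.1]
  refine ⟨fun x => ?_, fun x => ?_⟩
  · rw [key x]
    split_ifs with hx
    · rw [key x, if_pos hx]
    · rw [key, if_neg, h.1]
      rintro (h' | h')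
      · apply hx; right; rw [← h.1 x, h', hrs]
      · apply hx; left; rw [← h.1 x, h', hsr]
  · rw [key x, dl]
    split_ifs with hx
    · constructor
      · intro h; exact absurd rfl h
      · rintro ⟨_, h1, h2⟩
        rcases hx with hx | hx
        · exact absurd hx h1
        · exact absurd hx h2
    · push Not at hx
      rw [h.2]
      exact ⟨fun h => ⟨h, hx⟩, fun h => h.1⟩

lemma add_apply (h : IS (dl S r s) β) (_hrs : r ≠ s) (x : D) :
    (Equiv.swap r s * β) x = if x = r then s else if x = s then r else β x := by
  have h1 : β r = r := IS_fix h (fun h => h.2.1 rfl)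
  have h2 : β s = s := IS_fix h (fun h => h.2.2 rfl)
  rw [Equiv.Perm.mul_apply]
  split_ifs with hx hx'
  · rw [hx, h1, Equiv.swap_apply_left]
  · rw [hx', h2, Equiv.swap_apply_right]
  · rw [Equiv.swap_apply_of_ne_of_ne]
    · intro h'; apply hx; rw [← h.1 x, h', h1]
    · intro h'; apply hx'; rw [← h.1 x, h', h2]

lemma IS_add (h : IS (dl S r s) β) (hr : S r) (hs : S s) (hrs : r ≠ s) :
    IS S (Equiv.swap r s * β) := by
  have key := add_apply h hrs
  have h1 : β r = r := IS_fix h (fun h => h.2.1 rfl)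
  have h2 : β s = s := IS_fix h (fun h => h.2.2 rfl)
  refine ⟨fun x => ?_, fun x => ?_⟩
  · rw [key x]
    split_ifs with hx hx'
    · rw [key, if_neg hrs.symm, if_pos rfl, hx]
    · rw [key, if_pos rfl, hx']
    · rw [key, if_neg, if_neg, h.1]
      · intro h'; apply hx'; rw [← h.1 x, h', h2]
      · intro h'; apply hx; rw [← h.1 x, h', h1]
  · rw [key x]
    split_ifs with hx hx'
    · subst hx; exact ⟨fun _ => hr, fun _ => hrs.symm⟩
    · subst hx'; exact ⟨fun _ => hs, fun _ => hrs⟩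
    · rw [h.2]
      exact ⟨fun h => h.1, fun h => ⟨h, hx, hx'⟩⟩

lemma card_remove (hr : S r) (hs : S s) (hrs : r ≠ s) (P Q : Equiv.Perm D → Prop)
    (hPQ : ∀ α, IS S α → α r = s → (P α ↔ Q (Equiv.swap r s * α))) :
    Nat.card {α // (IS S α ∧ P α) ∧ α r = s} = Nat.card {β // IS (dl S r s) β ∧ Q β} := by
  have hh : ∀ γ : Equiv.Perm D, Equiv.swap r s * (Equiv.swap r s * γ) = γ := fun γ => by
    rw [← mul_assoc, Equiv.swap_mul_self, one_mul]
  refine Nat.card_congr ⟨fun α => ⟨Equiv.swap r s * α.1, ?_, ?_⟩,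
    fun β => ⟨Equiv.swap r s * β.1, ⟨?_, ?_⟩, ?_⟩, ?_, ?_⟩
  · exact IS_remove α.2.1.1 α.2.2
  · exact (hPQ α.1 α.2.1.1 α.2.2).1 α.2.1.2
  · exact IS_add β.2.1 hr hs hrs
  · rw [hPQ _ (IS_add β.2.1 hr hs hrs) (by rw [add_apply β.2.1 hrs, if_pos rfl]), hh]
    exact β.2.2
  · rw [add_apply β.2.1 hrs, if_pos rfl]
  · intro α; exact Subtype.ext (hh _)
  · intro β; exact Subtype.ext (hh _)

lemma EG_prr_remove (h : ∀ x, α (α x) = x) (hrs : α r = s) (x y : D) :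
    EG (prr φ α) x y ↔ EG (adj (prr (φ * Equiv.swap r s) (Equiv.swap r s * α)) r s) x y := by
  have key := rem_apply h hrs
  have hsr : α s = r := by rw [← hrs, h]
  constructor
  · refine EG_mono ?_
    rintro x y (hxy | hxy)
    · have h1 : EG (adj (pr φ) r s) x y := EG_adj_of (EG.rl hxy)
      refine EG_mono ?_ ((EG_swap_adj φ r s x y).2 h1)
      rintro x y (h | h)
      · exact EG.rl (Or.inl (Or.inl h))
      · exact EG.rl (Or.inr h)
    · by_cases hx : x = r ∨ x = s
      · rcases hx with rfl | rfl
        · rw [← hxy, hrs]; exact EG_adj_rs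
        · rw [← hxy, hsr]; exact EG_adj_rs.sy
      · refine EG.rl (Or.inl (Or.inr ?_))
        rw [key, if_neg hx, hxy]
  · have hst : EG (prr φ α) r s := EG.rl (Or.inr hrs)
    refine EG_mono ?_
    rintro x y ((hxy | hxy) | ⟨rfl, rfl⟩)
    · refine EG_mono ?_ (EG_swap_le φ r s x y (EG.rl hxy))
      rintro x y (h | ⟨rfl, rfl⟩)
      · exact EG.rl (Or.inl h)
      · exact hst
    · rw [key] at hxy
      split_ifs at hxy with hx
      · subst hxy; exact .refl _
      · exact EG.rl (Or.inr hxy)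
    · exact hst

lemma prod_remove : φ * Equiv.swap r s * (Equiv.swap r s * α) = φ * α := by
  rw [mul_assoc, ← mul_assoc (Equiv.swap r s), Equiv.swap_mul_self, one_mul]

lemma IS_empty_eq (h : IS S α) (hS : ∀ x, ¬ S x) : α = 1 :=
  Equiv.ext fun x => IS_fix h (hS x)

lemma EG_prr_one (x y : D) : EG (prr φ 1) x y ↔ EG (pr φ) x y := by
  constructor
  · refine EG_mono ?_
    rintro x y (h | h)
    · exact EG.rl h
    · rw [← h]; exact .refl _
  · exact EG_mono fun x y h => EG.rl (Or.inl h)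

lemma euler_le (N : ℕ) : ∀ (φ α : Equiv.Perm D) (S : D → Prop), sz S = N → IS S α →
    2 * (cl (pr (φ * α)) + cl (pr φ)) ≤ sz S + 4 * cl (prr φ α) := by
  induction N using Nat.strong_induction_on with
  | _ N ih =>
  intro φ α S hN h
  by_cases hS : ∀ x, ¬ S x
  · rw [IS_empty_eq h hS, mul_one, cl_congr (EG_prr_one (φ := φ))]
    omega
  · push Not at hS
    obtain ⟨r, hr⟩ := hS
    obtain ⟨s, hrs⟩ : ∃ s, α r = s := ⟨_, rfl⟩
    have hne : r ≠ s := by rw [← hrs]; exact ((h.2 r).2 hr).symm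
    have hs : S s := (h.2 s).1 (by rw [← hrs, h.1]; exact ((h.2 r).2 hr).symm)
    have hsz := sz_dl hr hs hne
    have := ih (sz (dl S r s)) (by omega) (φ * Equiv.swap r s) (Equiv.swap r s * α) (dl S r s) rfl
      (IS_remove h hrs)
    rw [prod_remove] at this
    have hc := cl_congr (EG_prr_remove (φ := φ) h.1 hrs)
    by_cases hE : EG (pr φ) r s
    · have h1 := cl_splt hne hE
      have h2 := cl_adj_le (R := prr (φ * Equiv.swap r s) (Equiv.swap r s * α)) (r := r) (s := s)
      omega
    · have h1 := cl_merge hE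
      have h2 : EG (prr (φ * Equiv.swap r s) (Equiv.swap r s * α)) r s :=
        EG_mono (fun x y h => EG.rl (Or.inl h)) (EG_merge hE)
      rw [cl_adj_same h2] at hc
      omega

lemma card_merge (hr : S r) (hs : S s) (hE : ¬ EG (pr φ) r s) :
    Nat.card {α // PP φ S α ∧ α r = s} =
      Nat.card {β // PP (φ * Equiv.swap r s) (dl S r s) β} := by
  have hne : r ≠ s := by rintro rfl; exact hE (.refl _)
  refine card_remove hr hs hne _ _ ?_
  intro α h hrs
  have hc := cl_congr (EG_prr_remove (φ := φ) h.1 hrs)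
  have h1 := cl_merge hE
  have h2 : EG (prr (φ * Equiv.swap r s) (Equiv.swap r s * α)) r s :=
    EG_mono (fun x y h => EG.rl (Or.inl h)) (EG_merge hE)
  rw [cl_adj_same h2] at hc
  have hsz := sz_dl hr hs hne
  rw [prod_remove, hc]
  constructor
  · rintro ⟨h3, h4⟩; exact ⟨h3, by omega⟩
  · rintro ⟨h3, h4⟩; exact ⟨h3, by omega⟩

lemma card_splt (hr : S r) (hs : S s) (hne : r ≠ s) (hE : EG (pr φ) r s) :
    Nat.card {α // PP φ S α ∧ α r = s} =
      Nat.card {β // P2 (φ * Equiv.swap r s) (dl S r s) r s β} := by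
  refine card_remove hr hs hne _ _ ?_
  intro α h hrs
  have hc := cl_congr (EG_prr_remove (φ := φ) h.1 hrs)
  have h1 := cl_splt hne hE
  have hsz := sz_dl hr hs hne
  rw [prod_remove, hc]
  constructor
  · rintro ⟨h3, h4⟩; exact ⟨h3, by omega⟩
  · rintro ⟨h3, h4⟩; exact ⟨h3, by omega⟩

lemma P2_not_EG {β : Equiv.Perm D} (h : P2 φ S r s β) : ¬ EG (prr φ β) r s := by
  intro h'
  have h1 := h.2.1
  rw [cl_adj_same h'] at h1
  have := euler_le _ φ β S rfl h.1
  have := h.2.2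
  omega

end gl

/-- fiberwise counting -/
lemma card_fib {A B : Type} [Finite A] (p : A → Prop) (g : A → B) (T : Finset B)
    (hg : ∀ a, p a → g a ∈ T) :
    Nat.card {a // p a} = ∑ b ∈ T, Nat.card {a // p a ∧ g a = b} := by
  classical
  have := Fintype.ofFinite A
  simp only [Nat.card_eq_fintype_card, Fintype.card_subtype]
  rw [Finset.card_eq_sum_card_fiberwise (f := g) (t := T)]
  · simp only [Finset.filter_filter]
  · intro a ha
    exact hg a (by simpa using ha)

end QB


namespace QB

set_option linter.unusedSectionVars false

section glue
variable {D : Type} [Finite D] {χ : D → Prop} [DecidablePred χ]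
  {f f' : Equiv.Perm {x // χ x}} {g g' : Equiv.Perm {x // ¬ χ x}} {S : D → Prop}

/-- glue two permutations -/
abbrev glue (f : Equiv.Perm {x // χ x}) (g : Equiv.Perm {x // ¬ χ x}) : Equiv.Perm D :=
  Equiv.Perm.subtypeCongr f g

lemma glue_l {x : D} (h : χ x) : glue f g x = (f ⟨x, h⟩).1 :=
  Equiv.Perm.subtypeCongr.left_apply f g h

lemma glue_r {x : D} (h : ¬ χ x) : glue f g x = (g ⟨x, h⟩).1 :=
  Equiv.Perm.subtypeCongr.right_apply f g h

lemma glue_inv (x : D) : χ x ↔ χ (glue f g x) := by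
  by_cases h : χ x
  · rw [glue_l h]; exact ⟨fun _ => (f _).2, fun _ => h⟩
  · rw [glue_r h]; exact ⟨fun h' => absurd h' h, fun h' => absurd h' (g _).2⟩

lemma glue_mul : glue f g * glue f' g' = glue (f * f') (g * g') := by
  ext x
  rw [Equiv.Perm.mul_apply]
  by_cases h : χ x
  · rw [glue_l h, glue_l h, glue_l (f' ⟨x, h⟩).2]; rfl
  · rw [glue_r h, glue_r h, glue_r (g' ⟨x, h⟩).2]; rfl

lemma rst_pr_l : rst (pr (glue f g)) χ = pr f := by
  funext x y
  unfold rst pr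
  rw [glue_l x.2, Subtype.ext_iff]

lemma rst_pr_r : rst (pr (glue f g)) (fun x => ¬ χ x) = pr g := by
  funext x y
  unfold rst pr
  rw [glue_r x.2, Subtype.ext_iff]

lemma rst_prr_l : rst (prr (glue f g) (glue f' g')) χ = prr f f' := by
  funext x y
  unfold rst prr
  rw [glue_l x.2, glue_l x.2, Subtype.ext_iff, Subtype.ext_iff]

lemma rst_prr_r : rst (prr (glue f g) (glue f' g')) (fun x => ¬ χ x) = prr g g' := by
  funext x y
  unfold rst prr
  rw [glue_r x.2, glue_r x.2, Subtype.ext_iff, Subtype.ext_iff]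

lemma pr_glue_inv (x y : D) (h : pr (glue f g) x y) : χ x ↔ χ y := by
  rw [← show glue f g x = y from h]; exact glue_inv x

lemma prr_glue_inv (x y : D) (h : prr (glue f g) (glue f' g') x y) : χ x ↔ χ y := by
  rcases h with h | h
  · exact pr_glue_inv x y h
  · exact pr_glue_inv x y h

lemma cl_glue : cl (pr (glue f g)) = cl (pr f) + cl (pr g) := by
  rw [cl_split (χ := χ) pr_glue_inv, rst_pr_l, rst_pr_r]

lemma cl_prr_glue : cl (prr (glue f g) (glue f' g')) = cl (prr f f') + cl (prr g g') := by
  rw [cl_split (χ := χ) prr_glue_inv, rst_prr_l, rst_prr_r]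

lemma sz_sub (χ S : D → Prop) : sz (fun x : {x // χ x} => S x.1) = sz (fun x => χ x ∧ S x) := by
  unfold sz
  rw [← Set.ncard_image_of_injective _ Subtype.val_injective]
  congr 1
  ext x
  simp only [Set.mem_image, Set.mem_ofPred_eq, Subtype.exists, exists_and_right, exists_eq_right]
  constructor
  · rintro ⟨h1, h2⟩; exact ⟨h1, h2⟩
  · rintro ⟨h1, h2⟩; exact ⟨h1, h2⟩

lemma sz_or {A B : D → Prop} (h : ∀ x, A x → ¬ B x) :
    sz (fun x => A x ∨ B x) = sz A + sz B := by
  unfold sz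
  rw [← Set.ncard_union_eq]
  · rfl
  · rw [Set.disjoint_left]; exact h

lemma sz_congr {A B : D → Prop} (h : ∀ x, A x ↔ B x) : sz A = sz B := by
  have : A = B := funext fun x => propext (h x)
  rw [this]

lemma sz_split (χ S : D → Prop) : sz S = sz (fun x : {x // χ x} => S x.1)
    + sz (fun x : {x // ¬ χ x} => S x.1) := by
  rw [sz_sub, sz_sub (fun x => ¬ χ x), ← sz_or]
  · exact sz_congr fun x => by tauto
  · intro x; tauto

lemma IS_glue : IS S (glue f g) ↔ IS (fun x : {x // χ x} => S x.1) f
    ∧ IS (fun x : {x // ¬ χ x} => S x.1) g := by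
  constructor
  · rintro ⟨h1, h2⟩
    refine ⟨⟨fun x => ?_, fun x => ?_⟩, ⟨fun x => ?_, fun x => ?_⟩⟩
    · have := h1 x.1
      rw [glue_l x.2, glue_l (f x).2] at this
      exact Subtype.ext this
    · show f x ≠ x ↔ S x.1
      rw [← h2 x.1, glue_l x.2, Ne, Ne, Subtype.ext_iff]
    · have := h1 x.1
      rw [glue_r x.2, glue_r (g x).2] at this
      exact Subtype.ext this
    · show g x ≠ x ↔ S x.1
      rw [← h2 x.1, glue_r x.2, Ne, Ne, Subtype.ext_iff]
  · rintro ⟨⟨h1, h2⟩, ⟨h3, h4⟩⟩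
    refine ⟨fun x => ?_, fun x => ?_⟩
    · by_cases h : χ x
      · rw [glue_l h, glue_l (f _).2, Subtype.coe_eta, h1]
      · rw [glue_r h, glue_r (g _).2, Subtype.coe_eta, h3]
    · by_cases h : χ x
      · rw [glue_l h]
        refine Iff.trans ?_ (h2 ⟨x, h⟩)
        rw [Ne, Ne, Subtype.ext_iff]
      · rw [glue_r h]
        refine Iff.trans ?_ (h4 ⟨x, h⟩)
        rw [Ne, Ne, Subtype.ext_iff]

lemma glue_surj {h : Equiv.Perm D} (hh : ∀ x, χ x ↔ χ (h x)) :
    ∃ (f : Equiv.Perm {x // χ x}) (g : Equiv.Perm {x // ¬ χ x}), h = glue f g := by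
  refine ⟨h.subtypePerm (fun x => (hh x).symm), h.subtypePerm (fun x => not_congr (hh x).symm), ?_⟩
  ext x
  by_cases hx : χ x
  · rw [glue_l hx]; rfl
  · rw [glue_r hx]; rfl

lemma P2_glue {r s : D} (hr : χ r) (hs : ¬ χ s) :
    (P2 (glue f g) S r s (glue f' g') ∧ ∀ x, EG (prr (glue f g) (glue f' g')) r x ↔ χ x) ↔
    PP f (fun x : {x // χ x} => S x.1) f' ∧ PP g (fun x : {x // ¬ χ x} => S x.1) g' := by
  classical
  have hno : ¬ EG (prr (glue f g) (glue f' g')) r s := fun h => hs ((EG_inv prr_glue_inv h).1 hr)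
  have hadj := cl_adj_ne hno
  unfold P2 PP
  rw [IS_glue, glue_mul, cl_glue, cl_glue]
  rw [cl_prr_glue] at hadj
  have hS := sz_split χ S
  constructor
  · rintro ⟨⟨⟨i1, i2⟩, h1, h2⟩, h3⟩
    have hA : cl (prr f f') = 1 := by
      rw [cl_eq_one_iff' ⟨r, hr⟩, ← rst_prr_l (f := f) (g := g) (f' := f') (g' := g')]
      intro x
      rw [EG_rst prr_glue_inv]
      exact (h3 x.1).2 x.2
    have e1 := euler_le _ f f' _ rfl i1
    have e2 := euler_le _ g g' _ rfl i2
    refine ⟨⟨i1, hA, ?_⟩, ⟨i2, ?_, ?_⟩⟩ <;> omega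
  · rintro ⟨⟨i1, h1, h2⟩, ⟨i2, h3, h4⟩⟩
    refine ⟨⟨⟨i1, i2⟩, by omega, by omega⟩, fun x => ⟨fun h => (EG_inv prr_glue_inv h).1 hr, ?_⟩⟩
    intro hx
    have := (cl_eq_one_iff' (⟨r, hr⟩ : {x // χ x})).1 h1 ⟨x, hx⟩
    rw [← rst_prr_l (f := f) (g := g) (f' := f') (g' := g')] at this
    exact EG_rst_of this

lemma card_prod {r s : D} (hr : χ r) (hs : ¬ χ s) :
    Nat.card {β // P2 (glue f g) S r s β ∧ ∀ x, EG (prr (glue f g) β) r x ↔ χ x} =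
      Nat.card {α // PP f (fun x : {x // χ x} => S x.1) α}
      * Nat.card {α // PP g (fun x : {x // ¬ χ x} => S x.1) α} := by
  rw [← Nat.card_prod]
  symm
  refine Nat.card_congr (Equiv.ofBijective
    (fun x => ⟨glue x.1.1 x.2.1, (P2_glue hr hs).2 ⟨x.1.2, x.2.2⟩⟩) ⟨?_, ?_⟩)
  · rintro ⟨⟨a, ha⟩, ⟨b, hb⟩⟩ ⟨⟨a', ha'⟩, ⟨b', hb'⟩⟩ h
    have h0 : glue a b = glue a' b' := congrArg Subtype.val h
    have h1 : a = a' := by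
      refine Equiv.ext fun x => Subtype.ext ?_
      have := congrArg (fun k : Equiv.Perm D => k x.1) h0
      rwa [glue_l x.2, glue_l x.2] at this
    have h2 : b = b' := by
      refine Equiv.ext fun x => Subtype.ext ?_
      have := congrArg (fun k : Equiv.Perm D => k x.1) h0
      rwa [glue_r x.2, glue_r x.2] at this
    subst h1 h2
    rfl
  · rintro ⟨β, h1, h2⟩
    have hβ : ∀ x, χ x ↔ χ (β x) := by
      intro x
      rw [← h2, ← h2]
      have : EG (prr (glue f g) β) x (β x) := EG.rl (Or.inr rfl)
      exact ⟨fun h => h.tr this, fun h => h.tr this.sy⟩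
    obtain ⟨a, b, rfl⟩ := glue_surj hβ
    have := (P2_glue hr hs).1 ⟨h1, h2⟩
    exact ⟨⟨⟨a, this.1⟩, ⟨b, this.2⟩⟩, rfl⟩

end glue

/-- degree profile: root cycle of degree `l`, the `n` others of degree 4 -/
structure Gd {D : Type} (φ : Equiv.Perm D) (S : D → Prop) (r : D) (n l : ℕ) : Prop where
  deg : sz (fun y => S y ∧ EG (pr φ) r y) = l
  oth : ∀ x, ¬ EG (pr φ) r x → sz (fun y => S y ∧ EG (pr φ) x y) = 4
  cnt : cl (pr φ) = n + 1

/-- degree profile after a split -/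
structure Gd2 {D : Type} (φ : Equiv.Perm D) (S : D → Prop) (r s : D) (n a b : ℕ) : Prop where
  ne : ¬ EG (pr φ) r s
  degr : sz (fun y => S y ∧ EG (pr φ) r y) = a
  degs : sz (fun y => S y ∧ EG (pr φ) s y) = b
  oth : ∀ x, ¬ EG (pr φ) r x → ¬ EG (pr φ) s x → sz (fun y => S y ∧ EG (pr φ) x y) = 4
  cnt : cl (pr φ) = n + 2

lemma cl_rst_card {D : Type} [Finite D] {R : D → D → Prop} {χ : D → Prop} (U : Finset (Quot R))
    (h : ∀ x, χ x ↔ Quot.mk R x ∈ U) : cl (rst R χ) = U.card := by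
  have hR : ∀ x y, R x y → (χ x ↔ χ y) := fun x y hxy => by
    rw [h, h, Quot.sound hxy]
  unfold cl
  rw [← Nat.card_eq_finsetCard U]
  refine Nat.card_congr (Equiv.ofBijective (fun q => ⟨Quot.map Subtype.val (fun _ _ h => h) q, ?_⟩)
    ⟨?_, ?_⟩)
  · obtain ⟨x⟩ := q
    exact (h x.1).1 x.2
  · rintro ⟨x⟩ ⟨y⟩ hxy
    exact mk_eq.2 ((EG_rst hR).2 (mk_eq.1 (congrArg Subtype.val hxy)))
  · rintro ⟨⟨x⟩, hx⟩
    exact ⟨Quot.mk _ ⟨x, (h x).2 hx⟩, rfl⟩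

end QB


namespace QB

set_option linter.unusedSectionVars false

lemma sz_le {D : Type} [Finite D] {A B : D → Prop} (h : ∀ x, A x → B x) : sz A ≤ sz B :=
  Set.ncard_le_ncard (fun x hx => h x hx) (Set.toFinite _)

lemma EG_glue_l {D : Type} [Finite D] {χ : D → Prop} [DecidablePred χ]
    {f : Equiv.Perm {x // χ x}} {g : Equiv.Perm {x // ¬ χ x}} (x y : {x // χ x}) :
    EG (pr f) x y ↔ EG (pr (glue f g)) x.1 y.1 := by
  rw [← EG_rst (χ := χ) pr_glue_inv, rst_pr_l]

lemma EG_glue_r {D : Type} [Finite D] {χ : D → Prop} [DecidablePred χ]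
    {f : Equiv.Perm {x // χ x}} {g : Equiv.Perm {x // ¬ χ x}} (x y : {x // ¬ χ x}) :
    EG (pr g) x y ↔ EG (pr (glue f g)) x.1 y.1 := by
  rw [← EG_rst (χ := fun x => ¬ χ x) (fun x y h => not_congr (pr_glue_inv x y h)), rst_pr_r]

lemma deg_glue_l {D : Type} [Finite D] {χ : D → Prop} [DecidablePred χ]
    {f : Equiv.Perm {x // χ x}} {g : Equiv.Perm {x // ¬ χ x}} (S : D → Prop) (x : {x // χ x}) :
    sz (fun y : {x // χ x} => S y.1 ∧ EG (pr f) x y)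
      = sz (fun y => S y ∧ EG (pr (glue f g)) x.1 y) := by
  rw [sz_congr (fun y => and_congr_right fun _ => EG_glue_l (g := g) x y),
    sz_sub χ (fun y => S y ∧ EG (pr (glue f g)) x.1 y)]
  refine sz_congr fun y => ⟨fun h => h.2, fun h => ⟨?_, h⟩⟩
  exact (EG_inv pr_glue_inv h.2).1 x.2

lemma deg_glue_r {D : Type} [Finite D] {χ : D → Prop} [DecidablePred χ]
    {f : Equiv.Perm {x // χ x}} {g : Equiv.Perm {x // ¬ χ x}} (S : D → Prop) (x : {x // ¬ χ x}) :
    sz (fun y : {x // ¬ χ x} => S y.1 ∧ EG (pr g) x y)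
      = sz (fun y => S y ∧ EG (pr (glue f g)) x.1 y) := by
  rw [sz_congr (fun y => and_congr_right fun _ => EG_glue_r (f := f) x y),
    sz_sub (fun x => ¬ χ x) (fun y => S y ∧ EG (pr (glue f g)) x.1 y)]
  refine sz_congr fun y => ⟨fun h => h.2, fun h => ⟨?_, h⟩⟩
  exact fun hy => x.2 ((EG_inv pr_glue_inv h.2).2 hy)

/-- The induction hypothesis. -/
def IH (N : ℕ) : Prop := ∀ (D : Type) [Finite D] (φ : Equiv.Perm D) (S : D → Prop) (r : D)
  (n l : ℕ), sz S < N → Gd φ S r n l → (Nat.card {α // PP φ S α} : ℚ) = GG n l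

lemma split_count {D : Type} [Finite D] {φ : Equiv.Perm D} {S : D → Prop} {r s : D}
    {n a b : ℕ} (h : Gd2 φ S r s n a b) {N : ℕ} (hN : sz S < N) (ih : IH N) :
    (Nat.card {β // P2 φ S r s β} : ℚ)
      = ∑ k ∈ Finset.range (n+1), (n.choose k : ℚ) * (GG k a * GG (n - k) b) := by
  classical
  have := Fintype.ofFinite (Quot (pr φ))
  let q : D → Quot (pr φ) := Quot.mk (pr φ)
  have hq : ∀ x y, q x = q y ↔ EG (pr φ) x y := fun x y => mk_eq
  have hqrs : q r ≠ q s := fun h' => h.ne ((hq r s).1 h')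
  let W : Finset (Quot (pr φ)) := Finset.univ \ {q r, q s}
  have hW : W.card = n := by
    have h1 : ({q r, q s} : Finset (Quot (pr φ))).card = 2 := Finset.card_pair hqrs
    have h2 : Fintype.card (Quot (pr φ)) = n + 2 := by
      rw [← Nat.card_eq_fintype_card]; exact h.cnt
    rw [Finset.card_sdiff_of_subset (Finset.subset_univ _), h1, Finset.card_univ, h2]
    omega
  let g : Equiv.Perm D → Finset (Quot (pr φ)) := fun β =>
    Finset.univ.filter fun c => c ≠ q r ∧ ∃ x, q x = c ∧ EG (prr φ β) r x
  have hpp : ∀ β x y, EG (pr φ) x y → EG (prr φ β) x y := fun β x y hxy =>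
    EG_mono (fun x y h => EG.rl (Or.inl h)) hxy
  rw [card_fib (fun β => P2 φ S r s β) g W.powerset]
  · push_cast
    have key : ∀ T ∈ W.powerset, (Nat.card {β // P2 φ S r s β ∧ g β = T} : ℚ)
        = GG T.card a * GG (n - T.card) b := by
      intro T hT
      have hT' := Finset.mem_powerset.1 hT
      have hTr : q r ∉ T := fun h => by have := hT' h; simp [W] at this
      have hTs : q s ∉ T := fun h => by have := hT' h; simp [W] at this
      let χ : D → Prop := fun x => q x ∈ insert (q r) T
      have hr : χ r := Finset.mem_insert_self _ _
      have hs : ¬ χ s := by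
        intro h'
        rcases Finset.mem_insert.1 h' with h' | h'
        · exact hqrs h'.symm
        · exact hTs h'
      have hiff : ∀ β, (P2 φ S r s β ∧ g β = T) ↔
          (P2 φ S r s β ∧ ∀ x, EG (prr φ β) r x ↔ χ x) := by
        intro β
        refine and_congr_right fun _ => ⟨?_, ?_⟩
        · intro hg x
          have hx : q x ∈ g β ↔ q x ∈ T := by rw [hg]
          simp only [g, Finset.mem_filter, Finset.mem_univ, true_and] at hx
          simp only [χ, Finset.mem_insert]
          rw [← hx]
          constructor
          · intro h1
            by_cases h2 : q x = q r
            · exact Or.inl h2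
            · exact Or.inr ⟨h2, x, rfl, h1⟩
          · rintro (h1 | ⟨_, y, h1, h2⟩)
            · exact hpp β _ _ ((hq _ _).1 h1.symm)
            · exact h2.tr (hpp β _ _ ((hq _ _).1 h1))
        · intro hx
          ext ⟨x⟩
          show q x ∈ g β ↔ q x ∈ T
          simp only [g, Finset.mem_filter, Finset.mem_univ, true_and]
          constructor
          · rintro ⟨h1, y, h2, h3⟩
            rw [hx] at h3
            rcases Finset.mem_insert.1 h3 with h3 | h3
            · exact absurd (h2.symm.trans h3) h1
            · rwa [h2] at h3
          · intro h1
            refine ⟨fun h2 => hTr (h2 ▸ h1), x, rfl, ?_⟩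
            rw [hx]
            exact Finset.mem_insert_of_mem h1
      have hφ : ∀ x, χ x ↔ χ (φ x) := by
        intro x
        have : q x = q (φ x) := (hq _ _).2 (EG_pr φ x)
        simp only [χ, this]
      obtain ⟨f1, f2, hf⟩ := glue_surj hφ
      have hsz := sz_split χ S
      have hcl : cl (pr f1) = T.card + 1 := by
        have h1 := cl_rst_card (R := pr φ) (χ := χ) (insert (q r) T) (fun x => Iff.rfl)
        rw [Finset.card_insert_of_notMem hTr] at h1
        rw [← h1, hf, rst_pr_l]
      have hTn : T.card ≤ n := by rw [← hW]; exact Finset.card_le_card hT'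
      rw [Nat.card_congr (Equiv.subtypeEquivRight hiff)]
      have hcnt := h.cnt
      rw [hf, cl_glue] at hcnt
      have hprod := card_prod (f := f1) (g := f2) (S := S) hr hs
      rw [← hf] at hprod
      rw [hprod]
      push_cast
      congr 1
      · refine ih _ f1 _ ⟨r, hr⟩ _ _ (by omega) ⟨?_, ?_, hcl⟩
        · rw [deg_glue_l (g := f2), ← hf]; exact h.degr
        · intro x hx
          rw [deg_glue_l (g := f2), ← hf]
          rw [EG_glue_l (g := f2), ← hf] at hx
          refine h.oth _ hx fun h' => hs ?_
          rw [hf] at h'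
          exact (EG_inv pr_glue_inv h').2 x.2
      · refine ih _ f2 _ ⟨s, hs⟩ _ _ (by omega) ⟨?_, ?_, by omega⟩
        · rw [deg_glue_r (f := f1), ← hf]; exact h.degs
        · intro x hx
          rw [deg_glue_r (f := f1), ← hf]
          rw [EG_glue_r (f := f1), ← hf] at hx
          refine h.oth _ (fun h' => x.2 ?_) hx
          rw [hf] at h'
          exact (EG_inv pr_glue_inv h').1 hr
    rw [Finset.sum_congr rfl key, Finset.sum_powerset_apply_card
      (fun k => GG k a * GG (n - k) b), hW]
    simp only [nsmul_eq_mul]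
  · intro β hβ
    rw [Finset.mem_powerset]
    intro c hc
    simp only [g, Finset.mem_filter, Finset.mem_univ, true_and] at hc
    obtain ⟨h1, x, rfl, h2⟩ := hc
    simp only [W, Finset.mem_sdiff, Finset.mem_univ, true_and, Finset.mem_insert,
      Finset.mem_singleton, not_or]
    refine ⟨h1, fun h3 => P2_not_EG hβ ?_⟩
    exact h2.tr (hpp β _ _ ((hq _ _).1 h3))

/-- rank summation over a finite set of integers -/
lemma rank_sum (h : ℕ → ℚ) (T : Finset ℕ) :
    ∑ i ∈ T, h (T.filter (· < i)).card = ∑ b ∈ Finset.range T.card, h b := by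
  induction T using Finset.induction_on_max with
  | empty => simp
  | insert m T hm ih =>
    have hmT : m ∉ T := fun h' => lt_irrefl _ (hm m h')
    rw [Finset.sum_insert hmT, Finset.card_insert_of_notMem hmT, Finset.sum_range_succ, ← ih,
      add_comm]
    congr 1
    · refine Finset.sum_congr rfl fun i hi => ?_
      rw [Finset.filter_insert, if_neg (not_lt.2 (hm i hi).le)]
    · rw [Finset.filter_insert, if_neg (lt_irrefl _), Finset.filter_true_of_mem hm]

end QB


namespace QB

set_option linter.unusedSectionVars false

lemma sz_eq_card {D : Type} [Fintype D] (S : D → Prop) [DecidablePred S] :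
    sz S = (Finset.univ.filter S).card := by
  unfold sz
  rw [← Set.ncard_coe_finset]
  congr 1
  ext x
  simp

section main
variable {D : Type} [Fintype D] [DecidableEq D] {S : D → Prop} {φ : Equiv.Perm D} {r s : D}

lemma EG_phi_merge (hE : ¬ EG (pr φ) r s) (x y : D) :
    EG (pr (φ * Equiv.swap r s)) x y ↔ EG (adj (pr φ) r s) x y := by
  rw [← EG_swap_adj, EG_adj_same (EG_merge hE)]

lemma Gd_merge {n l : ℕ} (h : Gd φ S r n l) (hr : S r) (hs : S s) (hE : ¬ EG (pr φ) r s) :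
    Gd (φ * Equiv.swap r s) (dl S r s) r (n - 1) (l + 2) := by
  have hne : r ≠ s := by rintro rfl; exact hE (.refl _)
  constructor
  · have h1 := sz_dl (S := fun y => S y ∧ (EG (pr φ) r y ∨ EG (pr φ) s y)) (r := r) (s := s)
      ⟨hr, Or.inl (.refl _)⟩ ⟨hs, Or.inr (.refl _)⟩ hne
    have h2 : sz (fun y => S y ∧ (EG (pr φ) r y ∨ EG (pr φ) s y)) = l + 4 := by
      rw [← h.deg, ← h.oth s hE, ← sz_or]
      · exact sz_congr fun x => by tauto
      · rintro x ⟨_, h1⟩ ⟨_, h2⟩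
        exact hE (h1.tr h2.sy)
    have h3 : sz (fun y => dl S r s y ∧ EG (pr (φ * Equiv.swap r s)) r y)
        = sz (dl (fun y => S y ∧ (EG (pr φ) r y ∨ EG (pr φ) s y)) r s) := by
      refine sz_congr fun y => ?_
      rw [EG_phi_merge hE, EG_adj]
      unfold dl
      have : EG (pr φ) r r := .refl _
      tauto
    omega
  · intro x hx
    rw [EG_phi_merge hE, EG_adj] at hx
    push Not at hx
    have hx1 := hx.1
    have hx2 : ¬ EG (pr φ) s x := hx.2.1 (.refl _)
    rw [← h.oth x hx1]
    refine sz_congr fun y => ?_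
    rw [EG_phi_merge hE, EG_adj]
    unfold dl
    constructor
    · rintro ⟨⟨h1, h2, h3⟩, h4 | ⟨h4, h5⟩ | ⟨h4, h5⟩⟩
      · exact ⟨h1, h4⟩
      · exact absurd h4.sy hx1
      · exact absurd h4.sy hx2
    · rintro ⟨h1, h2⟩
      refine ⟨⟨h1, ?_, ?_⟩, Or.inl h2⟩
      · rintro rfl; exact hx1 h2.sy
      · rintro rfl; exact hx2 h2.sy
  · have h1 := cl_merge hE
    have h2 := h.cnt
    have h3 : 0 < cl (pr (φ * Equiv.swap r s)) := by
      have : Nonempty (Quot (pr (φ * Equiv.swap r s))) := ⟨Quot.mk _ r⟩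
      exact Nat.card_pos
    omega

lemma Gd_splt {n l : ℕ} (h : Gd φ S r n (l+1)) (hr : S r) (hs : S s) (hne : r ≠ s)
    (hE : EG (pr φ) r s) :
    Gd2 (φ * Equiv.swap r s) (dl S r s) r s n
      (l - 1 - sz (fun y => dl S r s y ∧ EG (pr (φ * Equiv.swap r s)) s y))
      (sz (fun y => dl S r s y ∧ EG (pr (φ * Equiv.swap r s)) s y)) := by
  have hno := not_EG_splt hne hE
  have hadj : ∀ x y, EG (adj (pr (φ * Equiv.swap r s)) r s) x y ↔ EG (pr φ) x y := fun x y => by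
    rw [EG_swap_adj, EG_adj_same hE]
  refine ⟨hno, ?_, rfl, ?_, ?_⟩
  · have h1 := sz_dl (S := fun y => S y ∧ EG (pr φ) r y) (r := r) (s := s)
      ⟨hr, .refl _⟩ ⟨hs, hE⟩ hne
    rw [h.deg] at h1
    have h3 : sz (dl (fun y => S y ∧ EG (pr φ) r y) r s) =
        sz (fun y => dl S r s y ∧ EG (pr (φ * Equiv.swap r s)) r y)
        + sz (fun y => dl S r s y ∧ EG (pr (φ * Equiv.swap r s)) s y) := by
      rw [← sz_or]
      · refine sz_congr fun y => ?_
        unfold dl; beta_reduce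
        rw [← hadj, EG_adj]
        have : EG (pr (φ * Equiv.swap r s)) r r := .refl _
        tauto
      · rintro x ⟨_, h1⟩ ⟨_, h2⟩
        exact hno (h1.tr h2.sy)
    omega
  · intro x hx1 hx2
    have hx : ¬ EG (pr φ) r x := by
      rw [← hadj, EG_adj]
      rintro (h1 | ⟨_, h1⟩ | ⟨h1, _⟩)
      · exact hx1 h1
      · exact hx2 h1
      · exact hno h1
    rw [← h.oth x hx]
    refine sz_congr fun y => ?_
    rw [← hadj, EG_adj]
    unfold dl
    constructor
    · rintro ⟨⟨h1, h2, h3⟩, h4⟩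
      exact ⟨h1, Or.inl h4⟩
    · rintro ⟨h1, h4 | ⟨h4, h5⟩ | ⟨h4, h5⟩⟩
      · refine ⟨⟨h1, ?_, ?_⟩, h4⟩
        · rintro rfl; exact hx1 h4.sy
        · rintro rfl; exact hx2 h4.sy
      · exact absurd h4.sy hx1
      · exact absurd h4.sy hx2
  · rw [cl_splt hne hE, h.cnt]

lemma sum_splt [DecidablePred S] [DecidableRel (EG (pr φ))] {l : ℕ} (hr : S r)
    (hl : sz (fun y => S y ∧ EG (pr φ) r y) = l + 1) (h : ℕ → ℚ) :
    ∑ s ∈ Finset.univ.filter (fun s => (S s ∧ s ≠ r) ∧ EG (pr φ) r s),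
      h (sz (fun y => dl S r s y ∧ EG (pr (φ * Equiv.swap r s)) s y))
    = ∑ b ∈ Finset.range l, h b := by
  set L := Function.minimalPeriod φ r with hL
  let T : Finset ℕ := (Finset.range L).filter fun i => 0 < i ∧ S (φ^[i] r)
  have hmem : ∀ i, i ∈ T ↔ i < L ∧ 0 < i ∧ S (φ^[i] r) := fun i => by
    simp only [T, Finset.mem_filter, Finset.mem_range]
  have m1 : ∀ i ∈ T, φ^[i] r ∈ Finset.univ.filter (fun s => (S s ∧ s ≠ r) ∧ EG (pr φ) r s) := by
    intro i hi
    obtain ⟨h1, h2, h3⟩ := (hmem i).1 hi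
    simp only [Finset.mem_filter, Finset.mem_univ, true_and]
    refine ⟨⟨h3, fun h' => ?_⟩, EG_iter φ r i⟩
    have := iter_inj (i := i) (j := 0) (f := φ) (x := r) h1 (by omega) h'
    omega
  have m2 : Set.InjOn (fun i => φ^[i] r) (T : Set ℕ) := by
    intro i hi j hj hij
    exact iter_inj ((hmem i).1 hi).1 ((hmem j).1 hj).1 hij
  have m3 : Set.SurjOn (fun i => φ^[i] r) (T : Set ℕ)
      (Finset.univ.filter (fun s => (S s ∧ s ≠ r) ∧ EG (pr φ) r s) : Finset D) := by
    intro s hs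
    simp only [Finset.coe_filter, Finset.mem_univ, true_and, Set.mem_ofPred_eq] at hs
    obtain ⟨⟨h1, h2⟩, h3⟩ := hs
    obtain ⟨i, hi, rfl⟩ := EG_exists h3
    refine ⟨i, (hmem i).2 ⟨hi, ?_, h1⟩, rfl⟩
    rcases Nat.eq_zero_or_pos i with rfl | h
    · exact absurd rfl h2
    · exact h
  have hT : T.card = l := by
    have h1 : T.card = (Finset.univ.filter (fun s => (S s ∧ s ≠ r) ∧ EG (pr φ) r s)).card :=
      Finset.card_nbij (fun i => φ^[i] r) m1 m2 m3
    have h2 : (Finset.univ.filter (fun s => S s ∧ EG (pr φ) r s))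
        = insert r (Finset.univ.filter (fun s => (S s ∧ s ≠ r) ∧ EG (pr φ) r s)) := by
      ext x
      simp only [Finset.mem_filter, Finset.mem_univ, true_and, Finset.mem_insert]
      constructor
      · rintro ⟨h1, h2⟩
        by_cases h : x = r
        · exact Or.inl h
        · exact Or.inr ⟨⟨h1, h⟩, h2⟩
      · rintro (rfl | ⟨⟨h1, _⟩, h2⟩)
        · exact ⟨hr, .refl _⟩
        · exact ⟨h1, h2⟩
    rw [sz_eq_card, h2, Finset.card_insert_of_notMem (by simp)] at hl
    omega
  rw [← hT, ← rank_sum h T]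
  symm
  refine Finset.sum_nbij (fun i => φ^[i] r) m1 m2 m3 ?_
  intro i hi
  obtain ⟨h1, h2, h3⟩ := (hmem i).1 hi
  congr 1
  unfold sz
  rw [← Set.ncard_coe_finset, ← Set.ncard_image_of_injOn (f := fun i => φ^[i] r) (s := _)]
  · congr 1
    ext y
    simp only [Set.mem_image, Finset.coe_filter, Set.mem_ofPred_eq, EG_splt h2 h1, dl]
    constructor
    · rintro ⟨j, ⟨hj, hji⟩, rfl⟩
      obtain ⟨k1, k2, k3⟩ := (hmem j).1 hj
      refine ⟨⟨k3, fun h' => ?_, fun h' => ?_⟩, j, k2, hji.le, rfl⟩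
      · have := iter_inj (i := j) (j := 0) (f := φ) (x := r) k1 (by omega) h'
        omega
      · have := iter_inj (f := φ) (x := r) k1 h1 h'
        omega
    · rintro ⟨⟨k1, k2, k3⟩, j, k4, k5, rfl⟩
      have : j ≠ i := by rintro rfl; exact k3 rfl
      exact ⟨j, ⟨(hmem j).2 ⟨by omega, k4, k1⟩, by omega⟩, rfl⟩
  · intro a ha b hb hab
    simp only [Finset.coe_filter, Set.mem_ofPred_eq] at ha hb
    exact m2 ha.1 hb.1 hab

lemma sz_total {n l : ℕ} (h : Gd φ S r n l) :
    sz (fun y => S y ∧ ¬ EG (pr φ) r y) = 4 * n := by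
  classical
  have := Fintype.ofFinite (Quot (pr φ))
  have e1 : ∀ p : D → Prop, Nat.card {x // p x} = sz p := fun p => rfl
  rw [← e1, card_fib _ (fun x => Quot.mk (pr φ) x) (Finset.univ.erase (Quot.mk (pr φ) r))]
  · rw [Finset.sum_congr rfl (g := fun _ => 4), Finset.sum_const, Finset.card_erase_of_mem
      (Finset.mem_univ _), Finset.card_univ, ← Nat.card_eq_fintype_card,
      show Nat.card (Quot (pr φ)) = n + 1 from h.cnt, smul_eq_mul]
    · omega
    · rintro ⟨x⟩ hx
      have hx' : ¬ EG (pr φ) r x := fun h' => (Finset.mem_erase.1 hx).1 (mk_eq.2 h'.sy)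
      rw [e1, ← h.oth x hx']
      refine sz_congr fun y => ?_
      constructor
      · rintro ⟨⟨h1, h2⟩, h3⟩
        exact ⟨h1, (mk_eq.1 h3).sy⟩
      · rintro ⟨h1, h2⟩
        exact ⟨⟨h1, fun h' => hx' (h'.tr h2.sy)⟩, mk_eq.2 h2.sy⟩
  · rintro x ⟨h1, h2⟩
    exact Finset.mem_erase.2 ⟨fun h' => h2 (mk_eq.1 h').sy, Finset.mem_univ _⟩

lemma Gd_root {n l : ℕ} {r0 : D} (h : Gd φ S r0 n l) (hr : EG (pr φ) r0 r) : Gd φ S r n l := by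
  refine ⟨?_, ?_, h.cnt⟩
  · rw [← h.deg]
    exact sz_congr fun y => and_congr_right fun _ => ⟨fun h' => hr.tr h', fun h' => hr.sy.tr h'⟩
  · intro x hx
    exact h.oth x fun h' => hx (hr.sy.tr h')

lemma count_zero {n : ℕ} (h : Gd φ S r n 0) : (Nat.card {α // PP φ S α} : ℚ) = GG n 0 := by
  rw [GG_zero]
  have hS : ∀ y, EG (pr φ) r y → ¬ S y := by
    intro y hy hSy
    have h1 := h.deg
    unfold sz at h1
    rw [Set.ncard_eq_zero (Set.toFinite _)] at h1
    have : y ∈ ({x | S x ∧ EG (pr φ) r x} : Set D) := ⟨hSy, hy⟩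
    rw [h1] at this
    exact this
  split_ifs with hn
  · subst hn
    have h1 := (cl_eq_one_iff' r).1 h.cnt
    have hS' : ∀ y, ¬ S y := fun y => hS y (h1 y)
    have h0 : sz S = 0 := by
      unfold sz
      rw [Set.ncard_eq_zero (Set.toFinite _)]
      ext x; simpa using hS' x
    have : Nat.card {α // PP φ S α} = 1 := by
      rw [Nat.card_eq_one_iff_unique]
      refine ⟨⟨fun a b => Subtype.ext ?_⟩, ⟨⟨1, ⟨fun x => rfl, fun x => ?_⟩, ?_, ?_⟩⟩⟩
      · rw [IS_empty_eq a.2.1 hS', IS_empty_eq b.2.1 hS']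
      · simpa using hS' x
      · rw [cl_congr (EG_prr_one (φ := φ)), h.cnt]
      · rw [mul_one, h.cnt, h0]
    rw [this]; norm_num
  · have : Nat.card {α // PP φ S α} = 0 := by
      rw [Nat.card_eq_zero]
      left
      refine ⟨fun a => hn ?_⟩
      obtain ⟨α, h1, h2, h3⟩ := a
      have h4 := (cl_eq_one_iff' r).1 h2
      have h5 : ∀ x, EG (pr φ) r x := by
        intro x
        refine (EG_inv (R := prr φ α) (χ := fun x => EG (pr φ) r x) ?_ (h4 x)).1 (.refl _)
        rintro x y (rfl | rfl)
        · exact ⟨fun h => h.tr (EG_pr φ x), fun h => h.tr (EG_pr φ x).sy⟩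
        · constructor
          · intro h; rwa [IS_fix h1 (hS x h)]
          · intro h
            have := IS_fix h1 (hS _ h)
            rw [h1.1] at this
            rwa [← this] at h
      have := (cl_eq_one_iff' r).2 h5
      have := h.cnt
      omega
    rw [this]; norm_num

end main

theorem main_count (N : ℕ) : IH N := by
  induction N with
  | zero => intro D _ φ S r n l h; omega
  | succ N ih =>
    intro D _ φ S r0 n l hN h0
    classical
    have := Fintype.ofFinite D
    rcases l with _ | l
    · exact count_zero h0
    · obtain ⟨r, hr, hr0⟩ : ∃ r, S r ∧ EG (pr φ) r0 r := by
        by_contra hcon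
        push Not at hcon
        have h1 := h0.deg
        have : sz (fun y => S y ∧ EG (pr φ) r0 y) = 0 := by
          unfold sz
          rw [Set.ncard_eq_zero (Set.toFinite _)]
          ext x; simpa using hcon x
        omega
      have h := Gd_root h0 hr0
      rw [GG_rec, card_fib (fun α => PP φ S α) (fun α => α r)
        (Finset.univ.filter fun s => S s ∧ s ≠ r)]
      · push_cast
        rw [← Finset.sum_filter_add_sum_filter_not _ (fun s => EG (pr φ) r s), Finset.filter_filter,
          Finset.filter_filter]
        congr 1
        · rw [← sum_splt hr h.deg]
          refine Finset.sum_congr rfl fun s hs => ?_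
          simp only [Finset.mem_filter, Finset.mem_univ, true_and] at hs
          obtain ⟨⟨h1, h2⟩, h3⟩ := hs
          rw [card_splt hr h1 h2.symm h3]
          have := sz_dl hr h1 h2.symm
          exact split_count (Gd_splt h hr h1 h2.symm h3) (by omega) ih
        · rw [Finset.sum_congr rfl (g := fun _ => GG (n-1) (l+3)), Finset.sum_const, nsmul_eq_mul]
          · congr 1
            have h1 := sz_total h
            rw [sz_eq_card] at h1
            have h2 : (Finset.univ.filter fun a => (S a ∧ a ≠ r) ∧ ¬ EG (pr φ) r a)
                = Finset.univ.filter (fun y => S y ∧ ¬ EG (pr φ) r y) := by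
              ext x
              simp only [Finset.mem_filter, Finset.mem_univ, true_and]
              constructor
              · rintro ⟨⟨h1, _⟩, h2⟩; exact ⟨h1, h2⟩
              · rintro ⟨h1, h2⟩
                refine ⟨⟨h1, ?_⟩, h2⟩
                rintro rfl; exact h2 (.refl _)
            rw [h2, h1]; push_cast; ring
          · intro s hs
            simp only [Finset.mem_filter, Finset.mem_univ, true_and] at hs
            obtain ⟨⟨h1, h2⟩, h3⟩ := hs
            rw [card_merge hr h1 h3]
            have := sz_dl hr h1 h2.symm
            exact ih _ _ _ r _ _ (by omega) (Gd_merge h hr h1 h3)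
      · intro α hα
        simp only [Finset.mem_filter, Finset.mem_univ, true_and]
        refine ⟨(hα.1.2 _).1 ?_, (hα.1.2 r).2 hr⟩
        rw [hα.1.1]
        exact ((hα.1.2 r).2 hr).symm

end QB

namespace QB
open Equiv.Perm

lemma EG_same {D : Type} [Finite D] (f : Equiv.Perm D) (x y : D) :
    EG (pr f) x y ↔ f.SameCycle x y := by
  constructor
  · intro h
    induction h with
    | rel a b h => exact ⟨1, by rw [zpow_one]; exact h⟩
    | refl a => exact SameCycle.refl _ _
    | symm a b _ ih => exact ih.symm
    | trans a b c _ _ h1 h2 => exact h1.trans h2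
  · intro h
    obtain ⟨i, _, h⟩ := h.exists_pow_eq'
    rw [← h, ← Equiv.Perm.iterate_eq_pow]
    exact EG_iter _ _ _

lemma EG_same_gen {D : Type} [Finite D] (f : Equiv.Perm D) (x y : D) :
    EG f.SameCycle x y ↔ f.SameCycle x y := by
  constructor
  · intro h
    induction h with
    | rel a b h => exact h
    | refl a => exact SameCycle.refl _ _
    | symm a b _ ih => exact ih.symm
    | trans a b c _ _ h1 h2 => exact h1.trans h2
  · exact EG.rl

lemma oc_eq {D : Type} [Fintype D] (f : Equiv.Perm D) : orbitCount f = cl (pr f) := by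
  have : cl f.SameCycle = cl (pr f) :=
    cl_congr fun x y => by rw [EG_same, EG_same_gen]
  exact this

lemma fd_eq {D : Type} [Fintype D] (f : Equiv.Perm D) (d : D) :
    sz (fun y => (fun _ => True) y ∧ EG (pr f) d y) = faceDeg f d := by
  unfold sz faceDeg
  congr 1
  ext y
  simp [EG_same]

lemma conn_iff {D : Type} [Finite D] (σ α : Equiv.Perm D) (x y : D) :
    (∃ g ∈ Subgroup.closure ({σ, α} : Set (Equiv.Perm D)), g x = y) ↔ EG (prr σ α) x y := by
  constructor
  · rintro ⟨g, hg, rfl⟩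
    induction hg using Subgroup.closure_induction generalizing x with
    | mem g hg =>
      rcases hg with rfl | hg
      · exact EG.rl (Or.inl rfl)
      · rw [Set.mem_singleton_iff] at hg
        subst hg
        exact EG.rl (Or.inr rfl)
    | one => exact .refl _
    | mul a b _ _ ha hb => exact (hb x).tr (ha (b x))
    | inv a _ ha =>
      have := ha (a⁻¹ x)
      rw [← Equiv.Perm.mul_apply, mul_inv_cancel, Equiv.Perm.one_apply] at this
      exact this.sy
  · intro h
    induction h with
    | rel a b h =>
      rcases h with h | h
      · exact ⟨σ, Subgroup.subset_closure (by simp), h⟩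
      · exact ⟨α, Subgroup.subset_closure (by simp), h⟩
    | refl a => exact ⟨1, one_mem _, rfl⟩
    | symm a b _ ih =>
      obtain ⟨g, hg, rfl⟩ := ih
      exact ⟨g⁻¹, inv_mem hg, by simp⟩
    | trans a b c _ _ h1 h2 =>
      obtain ⟨g, hg, rfl⟩ := h1
      obtain ⟨g', hg', rfl⟩ := h2
      exact ⟨g' * g, mul_mem hg' hg, rfl⟩

lemma prr_mul {D : Type} [Finite D] (σ α : Equiv.Perm D) (hα : ∀ d, α (α d) = d) (x y : D) :
    EG (prr σ α) x y ↔ EG (prr (σ * α) α) x y := by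
  have key : ∀ τ : Equiv.Perm D, ∀ x y, prr (τ * α) α x y → EG (prr τ α) x y := by
    intro τ x y h
    rcases h with h | h
    · exact EG.tr (y := α x) (EG.rl (Or.inr rfl)) (EG.rl (Or.inl h))
    · exact EG.rl (Or.inr h)
  constructor
  · intro h
    have h2 : σ = σ * α * α := by ext d; simp [hα]
    rw [h2] at h
    exact EG_mono (key _) h
  · exact fun h => EG_mono (key _) h

/-- labelled structures as pairs of a rooted face permutation and a gluing -/
noncomputable def toPair (n p : ℕ) (hp : 1 ≤ p) : RootedQuadWB n p ≃
    Σ x : {x : Equiv.Perm (Fin (4 * n + 2 * p)) × Fin (4 * n + 2 * p) //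
      Gd x.1 (fun _ => True) x.2 n (2 * p)}, {α // PP x.1.1 (fun _ => True) α} where
  toFun m := ⟨⟨(m.σ * m.α, m.root), ⟨by rw [fd_eq]; exact m.root_face,
      fun x hx => by rw [fd_eq]; exact m.internal_faces x (by rwa [EG_same] at hx),
      by rw [← oc_eq]; exact m.face_count⟩⟩,
    ⟨m.α, ⟨m.α_invol, fun x => by simp [m.α_fixfree x]⟩, by
      rw [cl_eq_one_iff' m.root]
      intro x
      rw [← prr_mul _ _ m.α_invol, ← conn_iff]
      exact m.connected _ _, by
      have h2 : m.σ * m.α * m.α = m.σ := by ext d; simp [m.α_invol]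
      simp only [h2]
      rw [← oc_eq, ← oc_eq, m.euler]
      simp [sz, Set.ncard_univ]
      ring⟩⟩
  invFun x := {
    σ := x.1.1.1 * x.2.1
    α := x.2.1
    root := x.1.1.2
    α_invol := x.2.2.1.1
    α_fixfree := fun d => (x.2.2.1.2 d).2 trivial
    connected := fun d e => by
      rw [conn_iff]
      have h2 : x.1.1.1 * x.2.1 * x.2.1 = x.1.1.1 := by ext d; simp [x.2.2.1.1]
      rw [prr_mul _ _ x.2.2.1.1, h2]
      have h := (cl_eq_one_iff' x.1.1.2).1 x.2.2.2.1
      exact (h d).sy.tr (h e)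
    euler := by
      have h2 : x.1.1.1 * x.2.1 * x.2.1 = x.1.1.1 := by ext d; simp [x.2.2.1.1]
      rw [h2, oc_eq, oc_eq]
      have h3 := x.2.2.2.2
      have h4 : sz (fun _ : Fin (4 * n + 2 * p) => True) = 4 * n + 2 * p := by
        simp [sz, Set.ncard_univ]
      rw [h4] at h3
      omega
    face_count := by
      have h2 : x.1.1.1 * x.2.1 * x.2.1 = x.1.1.1 := by ext d; simp [x.2.2.1.1]
      rw [h2, oc_eq]; exact x.1.2.cnt
    root_face := by
      have h2 : x.1.1.1 * x.2.1 * x.2.1 = x.1.1.1 := by ext d; simp [x.2.2.1.1]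
      rw [h2, ← fd_eq]; exact x.1.2.deg
    internal_faces := fun d hd => by
      have h2 : x.1.1.1 * x.2.1 * x.2.1 = x.1.1.1 := by ext d; simp [x.2.2.1.1]
      rw [h2, ← fd_eq]
      rw [h2, ← EG_same] at hd
      exact x.1.2.oth d hd }
  left_inv m := by
    have h2 : m.σ * m.α * m.α = m.σ := by ext d; simp [m.α_invol]
    cases m
    simp only at h2
    simp only [h2]
  right_inv x := by
    obtain ⟨⟨⟨φ, r⟩, h⟩, ⟨α, hα⟩⟩ := x
    have h2 : φ * α * α = φ := by ext d; simp [hα.1.1]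
    refine Sigma.subtype_ext (Subtype.ext (Prod.ext h2 rfl)) rfl

lemma card_RQ (n p : ℕ) (hp : 1 ≤ p) : (Nat.card (RootedQuadWB n p) : ℚ) =
    Nat.card {x : Equiv.Perm (Fin (4 * n + 2 * p)) × Fin (4 * n + 2 * p) //
      Gd x.1 (fun _ => True) x.2 n (2 * p)} * GG n (2 * p) := by
  classical
  rw [Nat.card_congr (toPair n p hp), Nat.card_sigma]
  push_cast
  rw [Finset.sum_congr rfl (g := fun _ => GG n (2 * p)), Finset.sum_const, nsmul_eq_mul,
    Finset.card_univ, Nat.card_eq_fintype_card]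
  intro x _
  exact main_count _ _ _ _ _ _ _ (Nat.lt_succ_self _) x.2

end QB

namespace QB
open Equiv.Perm

lemma oc_conj {D : Type} [Fintype D] (f π : Equiv.Perm D) :
    orbitCount (π * f * π⁻¹) = orbitCount f := by
  unfold orbitCount
  refine Nat.card_congr (Quot.congr π⁻¹ fun x y => ?_)
  exact Equiv.Perm.sameCycle_conj

lemma fd_conj {D : Type} [Fintype D] (f π : Equiv.Perm D) (d : D) :
    faceDeg (π * f * π⁻¹) d = faceDeg f (π⁻¹ d) := by
  unfold faceDeg
  rw [← Set.ncard_image_of_injective {e | f.SameCycle (π⁻¹ d) e} π.injective]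
  congr 1
  ext e
  simp only [Equiv.Perm.sameCycle_conj, Set.mem_image, Set.mem_ofPred_eq]
  constructor
  · intro h; exact ⟨_, h, by simp⟩
  · rintro ⟨x, h, rfl⟩; simpa using h

/-- relabelling -/
def act {n p : ℕ} (π : Equiv.Perm (Fin (4 * n + 2 * p))) (m : RootedQuadWB n p) :
    RootedQuadWB n p where
  σ := π * m.σ * π⁻¹
  α := π * m.α * π⁻¹
  root := π m.root
  α_invol d := by simp [m.α_invol]
  α_fixfree d h := by
    apply m.α_fixfree (π⁻¹ d)
    apply π.injective
    simpa using h
  connected d e := by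
    obtain ⟨g, hg, h⟩ := m.connected (π⁻¹ d) (π⁻¹ e)
    refine ⟨π * g * π⁻¹, ?_, by
      rw [Equiv.Perm.mul_apply, Equiv.Perm.mul_apply, h]; simp⟩
    have h1 := Subgroup.mem_map_of_mem (MulAut.conj π).toMonoidHom hg
    rw [MonoidHom.map_closure, Set.image_pair] at h1
    exact h1
  euler := by
    have : π * m.σ * π⁻¹ * (π * m.α * π⁻¹) = π * (m.σ * m.α) * π⁻¹ := by group
    rw [this, oc_conj, oc_conj, m.euler]
  face_count := by
    have : π * m.σ * π⁻¹ * (π * m.α * π⁻¹) = π * (m.σ * m.α) * π⁻¹ := by group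
    rw [this, oc_conj, m.face_count]
  root_face := by
    have : π * m.σ * π⁻¹ * (π * m.α * π⁻¹) = π * (m.σ * m.α) * π⁻¹ := by group
    rw [this, fd_conj]
    have h := m.root_face
    simpa using h
  internal_faces d hd := by
    have : π * m.σ * π⁻¹ * (π * m.α * π⁻¹) = π * (m.σ * m.α) * π⁻¹ := by group
    rw [this, sameCycle_conj] at hd
    rw [this, fd_conj]
    exact m.internal_faces _ (by simpa using hd)

lemma RQ_ext {n p : ℕ} {m m' : RootedQuadWB n p} (h1 : m.σ = m'.σ) (h2 : m.α = m'.α)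
    (h3 : m.root = m'.root) : m = m' := by
  cases m; cases m'; simp only at h1 h2 h3; subst h1 h2 h3; rfl

lemma iso_iff {n p : ℕ} {m m' : RootedQuadWB n p} : QuadIso m m' ↔ ∃ π, act π m = m' := by
  constructor
  · rintro ⟨π, h1, h2, h3⟩
    refine ⟨π, RQ_ext ?_ ?_ h3⟩
    · simp only [act, h1]; group
    · simp only [act, h2]; group
  · rintro ⟨π, rfl⟩
    refine ⟨π, ?_, ?_, rfl⟩ <;> simp only [act] <;> group

lemma act_mul {n p : ℕ} (π ρ : Equiv.Perm (Fin (4 * n + 2 * p))) (m : RootedQuadWB n p) :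
    act π (act ρ m) = act (π * ρ) m := by
  refine RQ_ext ?_ ?_ ?_ <;> simp only [act] <;> rfl

lemma act_one {n p : ℕ} (m : RootedQuadWB n p) : act 1 m = m := by
  refine RQ_ext ?_ ?_ ?_ <;> simp [act]

lemma act_free {n p : ℕ} {π : Equiv.Perm (Fin (4 * n + 2 * p))} {m : RootedQuadWB n p}
    (h : act π m = m) : π = 1 := by
  have h1 : π * m.σ * π⁻¹ = m.σ := congrArg RootedQuadWB.σ h
  have h2 : π * m.α * π⁻¹ = m.α := congrArg RootedQuadWB.α h
  have h3 : π m.root = m.root := congrArg RootedQuadWB.root h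
  ext d
  obtain ⟨g, hg, rfl⟩ := m.connected m.root d
  have h4 : Commute π g := by
    have : Subgroup.closure {m.σ, m.α} ≤ Subgroup.centralizer {π} := by
      rw [Subgroup.closure_le]
      rintro x (rfl | hx)
      · rw [SetLike.mem_coe, Subgroup.mem_centralizer_singleton_iff]
        exact (mul_inv_eq_iff_eq_mul.1 h1).symm
      · rw [Set.mem_singleton_iff] at hx
        subst hx
        rw [SetLike.mem_coe, Subgroup.mem_centralizer_singleton_iff]
        exact (mul_inv_eq_iff_eq_mul.1 h2).symm
    exact ((Subgroup.mem_centralizer_singleton_iff.1 (this hg))).symm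
  rw [← Equiv.Perm.mul_apply, h4.eq, Equiv.Perm.mul_apply, h3]
  rfl

lemma iso_equiv {n p : ℕ} : Equivalence (@QuadIso n p) := by
  refine ⟨fun m => iso_iff.2 ⟨1, act_one m⟩, fun h => ?_, fun h h' => ?_⟩
  · obtain ⟨π, rfl⟩ := iso_iff.1 h
    exact iso_iff.2 ⟨π⁻¹, by rw [act_mul, inv_mul_cancel, act_one]⟩
  · obtain ⟨π, rfl⟩ := iso_iff.1 h
    obtain ⟨ρ, rfl⟩ := iso_iff.1 h'
    exact iso_iff.2 ⟨ρ * π, by rw [act_mul]⟩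

lemma card_quot (n p : ℕ) :
    Nat.card (Quot (@QuadIso n p)) * (4 * n + 2 * p).factorial = Nat.card (RootedQuadWB n p) := by
  have hmk : ∀ m m' : RootedQuadWB n p, Quot.mk QuadIso m = Quot.mk QuadIso m' ↔ QuadIso m m' :=
    fun m m' => by rw [Quot.eq, iso_equiv.eqvGen_iff]
  have hb : Function.Bijective (fun x : Quot (@QuadIso n p) × Equiv.Perm (Fin (4 * n + 2 * p)) =>
      act x.2 x.1.out) := by
    constructor
    · rintro ⟨q, π⟩ ⟨q', π'⟩ h
      simp only at h
      have hq : q = q' := by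
        rw [← Quot.out_eq q, ← Quot.out_eq q', hmk]
        refine iso_iff.2 ⟨π'⁻¹ * π, ?_⟩
        rw [← act_mul, h, act_mul, inv_mul_cancel, act_one]
      subst hq
      have : act (π'⁻¹ * π) q.out = q.out := by
        rw [← act_mul, h, act_mul, inv_mul_cancel, act_one]
      have := act_free this
      rw [inv_mul_eq_one] at this
      rw [this]
    · intro m
      have := (hmk (Quot.mk QuadIso m).out m).1 (Quot.out_eq _)
      obtain ⟨π, h⟩ := iso_iff.1 this
      exact ⟨(_, π), h⟩
  rw [← Nat.card_congr (Equiv.ofBijective _ hb), Nat.card_prod, Nat.card_perm]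
  simp

end QB

namespace QB
open Equiv.Perm

section
variable {D : Type} [Fintype D] [DecidableEq D] {φ : Equiv.Perm D}

lemma fd_supp {x : D} (h : x ∈ φ.support) : (φ.cycleOf x).support.card = faceDeg φ x := by
  unfold faceDeg
  rw [← Set.ncard_coe_finset]
  congr 1
  ext y
  simp only [SetLike.mem_coe, mem_support_cycleOf_iff, Set.mem_ofPred_eq]
  exact ⟨fun h => h.1, fun h' => ⟨h', h⟩⟩

lemma mem_supp {x : D} (h : faceDeg φ x ≠ 1) : x ∈ φ.support := by
  by_contra hx
  apply h
  rw [notMem_support] at hx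
  unfold faceDeg
  rw [Set.ncard_eq_one]
  refine ⟨x, ?_⟩
  ext y
  simp only [Set.mem_ofPred_eq, Set.mem_singleton_iff]
  constructor
  · intro h; exact (h.eq_of_left hx).symm
  · rintro rfl; exact SameCycle.refl _ _

lemma Gd_of {n p : ℕ} (hD : Fintype.card D = 4 * n + 2 * p) {r : D}
    (h1 : faceDeg φ r = 2 * p) (h2 : ∀ x, ¬ φ.SameCycle r x → faceDeg φ x = 4) :
    Gd φ (fun _ => True) r n (2 * p) := by
  have hc : 0 < cl (pr φ) := by
    have : Nonempty (Quot (pr φ)) := ⟨Quot.mk _ r⟩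
    exact Nat.card_pos
  obtain ⟨k, hk⟩ : ∃ k, cl (pr φ) = k + 1 := ⟨cl (pr φ) - 1, by omega⟩
  have hg : Gd φ (fun _ => True) r k (2 * p) :=
    ⟨by rw [fd_eq, h1], fun x hx => by rw [fd_eq]; exact h2 x (by rwa [EG_same] at hx), hk⟩
  have h3 := sz_total hg
  have h4 := hg.deg
  have h5 : sz (fun _ : D => True) = 4 * n + 2 * p := by
    rw [← hD]; simp [sz, Set.ncard_univ]
  have h6 : sz (fun _ : D => True) = sz (fun y => True ∧ EG (pr φ) r y)
      + sz (fun y => True ∧ ¬ EG (pr φ) r y) := by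
    rw [← sz_or]
    · exact sz_congr fun x => by tauto
    · tauto
  have : k = n := by omega
  exact this ▸ hg

lemma Gd_cycleType {n p : ℕ} (hp : 1 ≤ p) (hD : Fintype.card D = 4 * n + 2 * p) {r : D}
    (h : Gd φ (fun _ => True) r n (2 * p)) :
    φ.cycleType = (2 * p) ::ₘ Multiset.replicate n 4 := by
  have h1 : faceDeg φ r = 2 * p := by rw [← fd_eq]; exact h.deg
  have h2 : ∀ x, ¬ φ.SameCycle r x → faceDeg φ x = 4 := fun x hx => by
    rw [← fd_eq]; exact h.oth x (by rwa [EG_same])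
  have hs : ∀ x, x ∈ φ.support := by
    intro x
    by_cases hx : φ.SameCycle r x
    · have : r ∈ φ.support := mem_supp (by omega)
      rw [mem_support] at this ⊢
      rwa [Ne, ← hx.apply_eq_self_iff]
    · exact mem_supp (by rw [h2 x hx]; norm_num)
  have hm : φ.cycleOf r ∈ φ.cycleFactorsFinset := cycleOf_mem_cycleFactorsFinset_iff.2 (hs r)
  have e1 : φ.cycleType = (2 * p) ::ₘ ((φ.cycleFactorsFinset.erase (φ.cycleOf r)).1.map
      (Finset.card ∘ support)) := by
    rw [cycleType_def, ← Finset.insert_erase hm, Finset.insert_val_of_notMem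
      (Finset.notMem_erase _ _), Multiset.map_cons, Finset.insert_erase hm]
    congr 1
    rw [Function.comp_apply, fd_supp (hs r), h1]
  have e2 : (φ.cycleFactorsFinset.erase (φ.cycleOf r)).1.map (Finset.card ∘ support)
      = Multiset.replicate (φ.cycleFactorsFinset.erase (φ.cycleOf r)).card 4 := by
    rw [Multiset.eq_replicate]
    refine ⟨by rw [Multiset.card_map]; rfl, ?_⟩
    intro b hb
    rw [Multiset.mem_map] at hb
    obtain ⟨c, hc, rfl⟩ := hb
    rw [Finset.mem_val, Finset.mem_erase] at hc
    obtain ⟨x, hx⟩ := (mem_cycleFactorsFinset_iff.1 hc.2).1.nonempty_support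
    have hcx := (cycle_is_cycleOf hx hc.2)
    rw [Function.comp_apply, hcx, fd_supp (hs x)]
    apply h2
    intro hrx
    exact hc.1 (by rw [hcx]; exact hrx.cycleOf_eq.symm)
  rw [e2] at e1
  have e3 := sum_cycleType φ
  rw [e1] at e3
  have e4 : φ.support = Finset.univ := Finset.eq_univ_of_forall hs
  rw [e4, Finset.card_univ, hD, Multiset.sum_cons, Multiset.sum_replicate, smul_eq_mul] at e3
  rw [e1]
  congr 2
  omega

lemma cycleType_Gd {n p : ℕ} (hp : 1 ≤ p) (hD : Fintype.card D = 4 * n + 2 * p)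
    (h : φ.cycleType = (2 * p) ::ₘ Multiset.replicate n 4) :
    ∃ r, Gd φ (fun _ => True) r n (2 * p) := by
  have e3 := sum_cycleType φ
  rw [h, Multiset.sum_cons, Multiset.sum_replicate, smul_eq_mul] at e3
  have hs : ∀ x, x ∈ φ.support := by
    have : φ.support = Finset.univ := Finset.card_eq_iff_eq_univ _ |>.1 (by omega)
    intro x; rw [this]; exact Finset.mem_univ _
  have h2 : 2 * p ∈ φ.cycleType := by rw [h]; exact Multiset.mem_cons_self _ _
  rw [cycleType_def, Multiset.mem_map] at h2
  obtain ⟨c, hc, hcp⟩ := h2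
  rw [Finset.mem_val] at hc
  obtain ⟨r, hr⟩ := (mem_cycleFactorsFinset_iff.1 hc).1.nonempty_support
  have hcr := cycle_is_cycleOf hr hc
  refine ⟨r, Gd_of hD ?_ ?_⟩
  · rw [← fd_supp (hs r), ← hcr]; exact hcp
  · intro x hx
    rw [cycleType_def, ← Finset.insert_erase hc, Finset.insert_val_of_notMem
      (Finset.notMem_erase _ _), Multiset.map_cons, hcp, Multiset.cons_inj_right] at h
    have hx' : φ.cycleOf x ∈ φ.cycleFactorsFinset.erase c := by
      rw [Finset.mem_erase]
      refine ⟨?_, cycleOf_mem_cycleFactorsFinset_iff.2 (hs x)⟩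
      rw [hcr]
      intro he
      apply hx
      have : x ∈ (φ.cycleOf x).support := mem_support_cycleOf_iff.2 ⟨SameCycle.refl _ _, hs x⟩
      rw [he, mem_support_cycleOf_iff] at this
      exact this.1
    have := Multiset.mem_map_of_mem (Finset.card ∘ support) (show _ ∈ (φ.cycleFactorsFinset.erase c).1 from hx')
    rw [h] at this
    have := Multiset.eq_of_mem_replicate this
    rwa [Function.comp_apply, fd_supp (hs x)] at this

lemma card_roots {n p : ℕ} (hD : Fintype.card D = 4 * n + 2 * p) {r : D}
    (h : Gd φ (fun _ => True) r n (2 * p)) :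
    Nat.card {r // Gd φ (fun _ => True) r n (2 * p)} = if p = 2 then 4 * (n + 1) else 2 * p := by
  have h1 : faceDeg φ r = 2 * p := by rw [← fd_eq]; exact h.deg
  have h2 : ∀ x, ¬ φ.SameCycle r x → faceDeg φ x = 4 := fun x hx => by
    rw [← fd_eq]; exact h.oth x (by rwa [EG_same])
  split_ifs with hp
  · subst hp
    have : ∀ x, faceDeg φ x = 4 := by
      intro x
      by_cases hx : φ.SameCycle r x
      · rw [← fd_eq] at h1 ⊢
        rw [← EG_same] at hx
        refine Eq.trans ?_ h1
        refine sz_congr fun y => ?_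
        exact ⟨fun h => ⟨trivial, hx.tr h.2⟩, fun h => ⟨trivial, hx.sy.tr h.2⟩⟩
      · exact h2 x hx
    have h3 : ∀ x, Gd φ (fun _ => True) x n (2 * 2) := fun x =>
      Gd_of hD (this x) fun y _ => this y
    rw [Nat.card_congr (Equiv.subtypeUnivEquiv h3), Nat.card_eq_fintype_card, hD]
    ring
  · have h3 : ∀ x, Gd φ (fun _ => True) x n (2 * p) ↔ True ∧ EG (pr φ) r x := by
      intro x
      constructor
      · intro hx
        refine ⟨trivial, ?_⟩
        by_contra hn
        have := h.oth x hn
        rw [hx.deg] at this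
        omega
      · rintro ⟨-, hx⟩
        refine ⟨?_, ?_, h.cnt⟩
        · rw [← h.deg]
          refine sz_congr fun y => ?_
          exact ⟨fun h => ⟨trivial, hx.tr h.2⟩, fun h => ⟨trivial, hx.sy.tr h.2⟩⟩
        · intro y hy
          exact h.oth y fun h' => hy (hx.sy.tr h')
    rw [Nat.card_congr (Equiv.subtypeEquivRight h3)]
    exact h.deg

end

lemma card_pairs (n p : ℕ) (hp : 1 ≤ p) :
    Nat.card {x : Equiv.Perm (Fin (4 * n + 2 * p)) × Fin (4 * n + 2 * p) //
      Gd x.1 (fun _ => True) x.2 n (2 * p)} * (4 ^ n * n.factorial)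
      = (4 * n + 2 * p).factorial := by
  classical
  have hD : Fintype.card (Fin (4 * n + 2 * p)) = 4 * n + 2 * p := Fintype.card_fin _
  have hc := card_of_cycleType_mul_eq (α := Fin (4 * n + 2 * p))
    ((2 * p) ::ₘ Multiset.replicate n 4)
  have hsum : ((2 * p) ::ₘ Multiset.replicate n 4).sum = 4 * n + 2 * p := by
    rw [Multiset.sum_cons, Multiset.sum_replicate, smul_eq_mul]; ring
  rw [if_pos, hsum, hD, Nat.sub_self, Nat.factorial_zero, one_mul, Multiset.prod_cons,
    Multiset.prod_replicate] at hc
  swap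
  · refine ⟨by rw [hsum, hD], fun a ha => ?_⟩
    rw [Multiset.mem_cons] at ha
    rcases ha with rfl | ha
    · omega
    · rw [Multiset.eq_of_mem_replicate ha]; norm_num
  set C := (Finset.univ.filter fun g : Equiv.Perm (Fin (4 * n + 2 * p)) =>
    g.cycleType = (2 * p) ::ₘ Multiset.replicate n 4) with hC
  have hA : Nat.card {x : Equiv.Perm (Fin (4 * n + 2 * p)) × Fin (4 * n + 2 * p) //
      Gd x.1 (fun _ => True) x.2 n (2 * p)} = C.card * if p = 2 then 4 * (n + 1) else 2 * p := by
    rw [card_fib _ (fun x => x.1) C]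
    · rw [Finset.sum_congr rfl (g := fun _ => if p = 2 then 4 * (n + 1) else 2 * p),
        Finset.sum_const, smul_eq_mul]
      intro φ hφ
      rw [hC, Finset.mem_filter] at hφ
      obtain ⟨r, hr⟩ := cycleType_Gd hp hD hφ.2
      rw [← card_roots hD hr]
      refine Nat.card_congr
        { toFun := fun x => ⟨x.1.2, by have := x.2.1; rwa [x.2.2] at this⟩
          invFun := fun r => ⟨(φ, r.1), r.2, rfl⟩
          left_inv := ?_
          right_inv := fun x => rfl }
      rintro ⟨⟨a, b⟩, h, rfl⟩
      rfl
    · intro x hx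
      rw [hC, Finset.mem_filter]
      exact ⟨Finset.mem_univ _, Gd_cycleType hp hD hx⟩
  rw [hA, ← hc, mul_assoc]
  congr 1
  split_ifs with h2
  · subst h2
    have : ((2 * 2) ::ₘ Multiset.replicate n 4) = Multiset.replicate (n + 1) 4 := by
      rw [Multiset.replicate_succ]
    rw [this, Multiset.toFinset_replicate, if_neg (by omega), Finset.prod_singleton,
      Multiset.count_replicate_self, Nat.factorial_succ]
    ring
  · rw [Multiset.toFinset_cons, Multiset.toFinset_replicate]
    have h4 : 2 * p ≠ 4 := by omega
    split_ifs with hn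
    · subst hn
      simp
    · rw [Finset.prod_insert (by simpa using h4), Finset.prod_singleton,
        Multiset.count_cons_self, Multiset.count_cons_of_ne (Ne.symm h4),
        Multiset.count_replicate_self, Multiset.count_replicate, if_neg (Ne.symm h4)]
      simp
      ring

lemma card_final (n p : ℕ) (hp : 1 ≤ p) : (Nat.card (Quot (@QuadIso n p)) : ℚ) = ff n p := by
  have h1 := card_quot n p
  have h2 := card_RQ n p hp
  have h3 := card_pairs n p hp
  rw [GG_even, ← h1] at h2
  rw [← h3] at h2
  have hpos : (0 : ℚ) < (4 * n + 2 * p).factorial := by exact_mod_cast Nat.factorial_pos _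
  rw [← h3] at hpos
  push_cast at h2 hpos
  apply mul_right_cancel₀ hpos.ne'
  rw [h2]; ring

end QB

theorem card_quadrangulations_with_boundary (n p : ℕ) (hp : 1 ≤ p) :
    Nat.card (Quot (@QuadIso n p))
        * (p.factorial * (p - 1).factorial * n.factorial * (n + p + 1).factorial)
      = (2 * p).factorial * 3 ^ n * (2 * n + p - 1).factorial := by
  obtain ⟨k, rfl⟩ : ∃ k, p = k + 1 := ⟨p - 1, by omega⟩
  have h := QB.ff_closed n k
  rw [← QB.card_final n (k + 1) hp] at h
  exact_mod_cast h
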